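/- arXiv:1505.02315 — 4 statements merged into one kernel-verified Lean document; each statement's English description precedes it below -/
import Mathlib

section
/- Let U and V be finite-dimensional vector spaces over a field K and 𝒮 an affine subspace of L(U,V) with codim 𝒮 = dim V − 1. Assume that either dim V ≥ 3 and K has more than 2 elements, or dim V ≥ 2 and K has more than 3 elements. Then either every quasi-range-compatible affine map F : 𝒮 → V is local, or there exists a vector x ∈ U such that the affine subspace 𝒮x = {s(x) : s ∈ 𝒮} of V has dimension 1. -/
namespace QRC

open Module

set_option linter.unusedSectionVars false
set_option linter.unusedSimpArgs false

section

variable {K U V : Type*} [Field K]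
    [AddCommGroup U] [Module K U] [FiniteDimensional K U]
    [AddCommGroup V] [Module K V] [FiniteDimensional K V]

/-- Trace-orthogonal of `W`, cut by vanishing on `N`. -/
def TN (W : Submodule K (U →ₗ[K] V)) (N : Submodule K V) : Submodule K (V →ₗ[K] U) where
  carrier := {t | (∀ s ∈ W, LinearMap.trace K V (s ∘ₗ t) = 0) ∧ ∀ y ∈ N, t y = 0}
  add_mem' := by
    rintro a b ⟨ha, ha'⟩ ⟨hb, hb'⟩
    refine ⟨fun s hs => ?_, fun y hy => ?_⟩
    · rw [LinearMap.comp_add, map_add, ha s hs, hb s hs, add_zero]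
    · rw [LinearMap.add_apply, ha' y hy, hb' y hy, add_zero]
  zero_mem' := by simp
  smul_mem' := by
    rintro c a ⟨ha, ha'⟩
    refine ⟨fun s hs => ?_, fun y hy => ?_⟩
    · rw [LinearMap.comp_smul, map_smul, ha s hs, smul_zero]
    · rw [LinearMap.smul_apply, ha' y hy, smul_zero]

lemma mem_TN {W : Submodule K (U →ₗ[K] V)} {N : Submodule K V} {t : V →ₗ[K] U} :
    t ∈ TN W N ↔ (∀ s ∈ W, LinearMap.trace K V (s ∘ₗ t) = 0) ∧ ∀ y ∈ N, t y = 0 := Iff.rfl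

lemma trace_rank_one (s : U →ₗ[K] V) (φ : Dual K V) (x : U) :
    LinearMap.trace K V (s ∘ₗ φ.smulRight x) = φ (s x) := by
  have : s ∘ₗ φ.smulRight x = φ.smulRight (s x) := by ext; simp
  rw [this, LinearMap.trace_smulRight]

lemma rank_one_mem {W : Submodule K (U →ₗ[K] V)} {N : Submodule K V} {φ : Dual K V} {x : U}
    (h : ∀ s ∈ W, φ (s x) = 0) (hN : φ ∈ N.dualAnnihilator) :
    φ.smulRight x ∈ TN W N := by
  refine ⟨fun s hs => ?_, fun y hy => ?_⟩
  · rw [trace_rank_one, h s hs]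
  · simp [(Submodule.mem_dualAnnihilator φ).1 hN y hy]

lemma TN_anti (W : Submodule K (U →ₗ[K] V)) {N N' : Submodule K V} (h : N ≤ N') :
    TN W N' ≤ TN W N := fun _ ht => ⟨ht.1, fun y hy => ht.2 y (h hy)⟩

lemma finrank_TN_bot (W : Submodule K (U →ₗ[K] V)) :
    finrank K W + finrank K (TN W ⊥) = finrank K (U →ₗ[K] V) := by
  let B : (V →ₗ[K] U) →ₗ[K] Dual K (U →ₗ[K] V) :=
    { toFun := fun t =>
        { toFun := fun s => LinearMap.trace K V (s ∘ₗ t)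
          map_add' := fun a b => by rw [LinearMap.add_comp, map_add]
          map_smul' := fun c a => by rw [LinearMap.smul_comp, map_smul]; rfl }
      map_add' := fun a b => by ext s; simp [LinearMap.comp_add]
      map_smul' := fun c a => by ext s; simp [LinearMap.comp_smul] }
  have hB : Function.Injective B := by
    rw [injective_iff_map_eq_zero]
    intro t ht
    ext y
    rw [LinearMap.zero_apply, ← forall_dual_apply_eq_zero_iff K]
    intro f
    have h1 : B t (f.smulRight y) = 0 := by rw [ht]; rfl
    have h2 : B t (f.smulRight y) = LinearMap.trace K V ((f.smulRight y) ∘ₗ t) := rfl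
    have h3 : (f.smulRight y) ∘ₗ t = (f ∘ₗ t).smulRight y := by ext; simp
    rw [h2, h3, LinearMap.trace_smulRight] at h1
    simpa using h1
  let e := LinearMap.linearEquivOfInjective B hB (by
    rw [Subspace.dual_finrank_eq, finrank_linearMap, finrank_linearMap, mul_comm])
  have he : (TN W ⊥).map (e : (V →ₗ[K] U) →ₗ[K] Dual K (U →ₗ[K] V)) = W.dualAnnihilator := by
    ext g
    constructor
    · rintro ⟨t, ht, rfl⟩
      rw [Submodule.mem_dualAnnihilator]
      exact fun s hs => ht.1 s hs
    · intro hg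
      refine ⟨e.symm g, ⟨fun s hs => ?_, fun y hy => ?_⟩, by simp⟩
      · have h1 : B (e.symm g) = g := e.apply_symm_apply g
        have h2 : B (e.symm g) s = 0 := by rw [h1]; exact (Submodule.mem_dualAnnihilator g).1 hg s hs
        exact h2
      · rw [(Submodule.mem_bot K).1 hy, map_zero]
  rw [← Subspace.finrank_add_finrank_dualAnnihilator_eq W, ← he, LinearEquiv.finrank_map_eq]

/-- The data: `F (s0 + w) = v0 + G w`. -/
def QC (W : Submodule K (U →ₗ[K] V)) (s0 : U →ₗ[K] V) (G : W →ₗ[K] V) (v0 d : V) : Prop :=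
  ∀ (w : W) (φ : Dual K V), φ d ≠ 0 → φ ∘ₗ (s0 + (w : U →ₗ[K] V)) = 0 → φ (v0 + G w) = 0

def Loc (W : Submodule K (U →ₗ[K] V)) (s0 : U →ₗ[K] V) (G : W →ₗ[K] V) (v0 : V)
    (N : Submodule K V) : Prop :=
  ∃ x : U, ∀ φ ∈ N.dualAnnihilator, ∀ w : W,
    φ (v0 + G w) = φ ((s0 + (w : U →ₗ[K] V)) x)

variable {W : Submodule K (U →ₗ[K] V)} {s0 : U →ₗ[K] V} {G : W →ₗ[K] V} {v0 d : V}

lemma solve (hq : QC W s0 G v0 d) (φ : Dual K V) (hd : φ d ≠ 0)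
    (hx : ∀ x, (∀ s ∈ W, φ (s x) = 0) → x = 0) :
    ∃ x : U, ∀ w : W, φ (v0 + G w) = φ ((s0 + (w : U →ₗ[K] V)) x) := by
  let m : W →ₗ[K] Dual K U :=
    { toFun := fun w => φ ∘ₗ (w : U →ₗ[K] V)
      map_add' := fun a b => by ext; simp
      map_smul' := fun c a => by ext; simp }
  have hm : ∀ w x, m w x = φ ((w : U →ₗ[K] V) x) := fun _ _ => rfl
  have hs : LinearMap.range m = ⊤ := by
    rw [← Subspace.dualCoannihilator_dualAnnihilator_eq (W := LinearMap.range m)]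
    have : (LinearMap.range m).dualCoannihilator = ⊥ := by
      rw [eq_bot_iff]
      intro x hx'
      rw [Submodule.mem_dualCoannihilator] at hx'
      rw [Submodule.mem_bot]
      exact hx x fun s hs => hx' (m ⟨s, hs⟩) ⟨_, rfl⟩
    rw [this, Submodule.dualAnnihilator_bot]
  obtain ⟨w1, hw1⟩ : ∃ w1, m w1 = -(φ ∘ₗ s0) := by
    have : -(φ ∘ₗ s0) ∈ LinearMap.range m := by rw [hs]; trivial
    exact this
  have hw1' : ∀ x, φ ((w1 : U →ₗ[K] V) x) = - φ (s0 x) := fun x => by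
    rw [← hm, hw1]; rfl
  have h1 : φ (v0 + G w1) = 0 := hq w1 φ hd (by ext x; simp [hw1'])
  have h2 : φ ∘ₗ G ∈ (LinearMap.ker m).dualAnnihilator := by
    rw [Submodule.mem_dualAnnihilator]
    intro w hw
    have hw' : ∀ x, φ ((w : U →ₗ[K] V) x) = 0 := fun x => by
      rw [← hm, LinearMap.mem_ker.1 hw]; rfl
    have h3 : φ (v0 + G (w1 + w)) = 0 := hq (w1 + w) φ hd (by ext x; simp [hw1', hw'])
    rw [G.map_add, ← add_assoc, map_add, h1, zero_add] at h3
    exact h3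
  rw [← LinearMap.range_dualMap_eq_dualAnnihilator_ker] at h2
  obtain ⟨g, hg⟩ := h2
  obtain ⟨x, rfl⟩ := (evalEquiv K U).surjective g
  have hg' : ∀ w : W, φ (G w) = φ ((w : U →ₗ[K] V) x) := fun w => (LinearMap.congr_fun hg w).symm
  refine ⟨x, fun w => ?_⟩
  rw [map_add, hg'] at h1
  rw [map_add, hg', LinearMap.add_apply, map_add]
  rw [hw1'] at h1
  linear_combination h1

lemma finrank_sp_le (y : V) : finrank K (K ∙ y) ≤ 1 := by
  simpa using finrank_span_le_card (R := K) ({y} : Set V)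

lemma combine {N : Submodule K V} {k : ℕ} (hk : finrank K N + k = finrank K V)
    {y1 y2 : V} (hy : y2 ∉ N ⊔ K ∙ y1)
    (h1 : Loc W s0 G v0 (N ⊔ K ∙ y1)) (h2 : Loc W s0 G v0 (N ⊔ K ∙ y2))
    (hT : finrank K (TN W (N ⊔ K ∙ y1)) + 3 ≤ k) : Loc W s0 G v0 N := by
  obtain ⟨x1, h1⟩ := h1
  obtain ⟨x2, h2⟩ := h2
  by_cases hx : x1 = x2
  · subst hx
    refine ⟨x1, fun φ hφ w => ?_⟩
    have hN : (N ⊔ K ∙ y1) ⊓ (N ⊔ K ∙ y2) = N := by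
      apply le_antisymm
      · rintro z ⟨hz1, hz2⟩
        obtain ⟨n, hn, b, hb, rfl⟩ := Submodule.mem_sup.1 hz2
        obtain ⟨c, rfl⟩ := Submodule.mem_span_singleton.1 hb
        by_cases hc : c = 0
        · simpa [hc] using hn
        · exfalso
          apply hy
          have h3 : c • y2 ∈ N ⊔ K ∙ y1 := by
            have := Submodule.sub_mem _ hz1 (Submodule.mem_sup_left (T := K ∙ y1) hn)
            simpa using this
          exact (Submodule.smul_mem_iff _ hc).1 h3
      · exact le_inf le_sup_left le_sup_left
    rw [← hN, Subspace.dualAnnihilator_inf_eq] at hφ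
    obtain ⟨a, ha, b, hb, rfl⟩ := Submodule.mem_sup.1 hφ
    rw [LinearMap.add_apply, LinearMap.add_apply, h1 a ha w, h2 b hb w]
  · exfalso
    let N' := N ⊔ (K ∙ y1) ⊔ K ∙ y2
    have hN'1 : N ⊔ (K ∙ y1) ≤ N' := le_sup_left
    have hN'2 : N ⊔ (K ∙ y2) ≤ N' := sup_le (le_sup_left.trans hN'1) le_sup_right
    have hx' : x1 - x2 ≠ 0 := sub_ne_zero.2 hx
    let j : Dual K V →ₗ[K] (V →ₗ[K] U) := LinearMap.smulRightₗ.flip (x1 - x2)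
    have hj : ∀ φ, j φ = φ.smulRight (x1 - x2) := fun _ => rfl
    have hinj : Function.Injective j := by
      rw [injective_iff_map_eq_zero]
      intro φ hφ
      ext y
      have := LinearMap.congr_fun hφ y
      rw [hj] at this
      simpa [hx'] using this
    have hle : N'.dualAnnihilator.map j ≤ TN W (N ⊔ K ∙ y1) := by
      rintro _ ⟨φ, hφ, rfl⟩
      have hφ1 := Submodule.dualAnnihilator_anti hN'1 hφ
      have hφ2 := Submodule.dualAnnihilator_anti hN'2 hφ
      rw [hj]
      refine rank_one_mem (fun s hs => ?_) hφ1
      have e1 := (h1 φ hφ1 ⟨s, hs⟩).symm.trans (h2 φ hφ2 ⟨s, hs⟩)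
      have e2 := (h1 φ hφ1 0).symm.trans (h2 φ hφ2 0)
      simp only [LinearMap.add_apply, map_add, Submodule.coe_zero, LinearMap.zero_apply,
        map_zero, add_zero] at e1 e2
      rw [map_sub, map_sub]
      linear_combination e1 - e2
    have h3 := Submodule.finrank_mono hle
    rw [← (Submodule.equivMapOfInjective j hinj N'.dualAnnihilator).finrank_eq] at h3
    have h4 := Subspace.finrank_add_finrank_dualAnnihilator_eq N'
    have h5 := Submodule.finrank_add_le_finrank_add_finrank (N ⊔ (K ∙ y1)) (K ∙ y2)
    have h6 := Submodule.finrank_add_le_finrank_add_finrank N (K ∙ y1)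
    have h7 := finrank_sp_le (K := K) y1
    have h8 := finrank_sp_le (K := K) y2
    change finrank K N' ≤ _ at h5
    omega


lemma exists_notMem_two {E1 E2 : Submodule K V} (h1 : E1 ≠ ⊤) (h2 : E2 ≠ ⊤) :
    ∃ y, y ∉ E1 ∧ y ∉ E2 := by
  by_contra! h
  obtain ⟨a, -, ha⟩ := SetLike.exists_of_lt h1.lt_top
  obtain ⟨b, -, hb⟩ := SetLike.exists_of_lt h2.lt_top
  have ha2 := h a ha
  have hb1 : b ∈ E1 := by
    by_contra hb1
    exact hb (h b hb1)
  have hab : a + b ∉ E1 := fun hab => ha (by simpa using E1.sub_mem hab hb1)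
  exact hb (by simpa using E2.sub_mem (h _ hab) ha2)

lemma frame {N : Submodule K V} (hk : finrank K N + 2 = finrank K V) (hd : d ∉ N) :
    ∃ (φ1 φ2 : Dual K V) (y1 y2 : V), φ1 ∈ N.dualAnnihilator ∧ φ2 ∈ N.dualAnnihilator ∧
      φ1 d = 1 ∧ φ2 d = 1 ∧ φ1 y1 = 1 ∧ φ1 y2 = 0 ∧ φ2 y1 = 0 ∧ φ2 y2 = 1 ∧
      ∀ φ ∈ N.dualAnnihilator, φ = φ y1 • φ1 + φ y2 • φ2 := by
  obtain ⟨f, hfd, hfN⟩ := Submodule.exists_le_ker_of_notMem hd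
  have hfN' : f ∈ N.dualAnnihilator := (Submodule.mem_dualAnnihilator f).2 fun y hy => hfN hy
  obtain ⟨φ1, hφ1, hφ1d⟩ : ∃ φ1 : Dual K V, φ1 ∈ N.dualAnnihilator ∧ φ1 d = 1 :=
    ⟨(f d)⁻¹ • f, Submodule.smul_mem _ _ hfN', by simp [hfd]⟩
  have hlt : N ⊔ K ∙ d < ⊤ := by
    apply Submodule.lt_top_of_finrank_lt_finrank
    have h6 := Submodule.finrank_add_le_finrank_add_finrank N (K ∙ d)
    have h7 := finrank_sp_le (K := K) d
    omega
  obtain ⟨z, -, hz⟩ := SetLike.exists_of_lt hlt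
  let y2' := z - φ1 z • d
  have hy2N : y2' ∉ N := fun h => hz (by
    have : z = y2' + φ1 z • d := by simp [y2']
    rw [this]
    exact Submodule.add_mem_sup h (Submodule.smul_mem _ _ (Submodule.mem_span_singleton_self d)))
  have hy21 : φ1 y2' = 0 := by simp [y2', hφ1d]
  obtain ⟨g, hg, hgN⟩ := Submodule.exists_le_ker_of_notMem hy2N
  have hgN' : g ∈ N.dualAnnihilator := (Submodule.mem_dualAnnihilator g).2 fun y hy => hgN hy
  let ψ := (g y2')⁻¹ • g
  have hψN : ψ ∈ N.dualAnnihilator := Submodule.smul_mem _ _ hgN'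
  have hψ1 : ψ y2' = 1 := by simp [ψ, hg]
  let φ2 := ψ + (1 - ψ d) • φ1
  have hφ2N : φ2 ∈ N.dualAnnihilator := Submodule.add_mem _ hψN (Submodule.smul_mem _ _ hφ1)
  have hφ2d : φ2 d = 1 := by simp [φ2, hφ1d]
  have hφ2y : φ2 y2' = 1 := by simp [φ2, hy21, hψ1]
  have hA : φ1 (d - y2') = 1 := by rw [map_sub, hφ1d, hy21, sub_zero]
  have hB : φ2 (d - y2') = 0 := by rw [map_sub, hφ2d, hφ2y, sub_self]
  refine ⟨φ1, φ2, d - y2', y2', hφ1, hφ2N, hφ1d, hφ2d, hA, hy21, hB, hφ2y, ?_⟩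
  intro φ hφ
  have hli : LinearIndependent K ![φ1, φ2] := by
    rw [LinearIndependent.pair_iff]
    intro a b hab
    have e1 := LinearMap.congr_fun hab (d - y2')
    have e2 := LinearMap.congr_fun hab y2'
    simp only [LinearMap.add_apply, LinearMap.smul_apply, hA, hB, hy21, hφ2y,
      LinearMap.zero_apply, smul_eq_mul, mul_one, mul_zero, add_zero, zero_add] at e1 e2
    exact ⟨e1, e2⟩
  have hsp : Submodule.span K (Set.range ![φ1, φ2]) = N.dualAnnihilator := by
    apply Submodule.eq_of_le_of_finrank_eq
    · rw [Submodule.span_le]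
      rintro _ ⟨i, rfl⟩
      fin_cases i
      · exact hφ1
      · exact hφ2N
    · rw [finrank_span_eq_card hli]
      have := Subspace.finrank_add_finrank_dualAnnihilator_eq N
      simp only [Fintype.card_fin]
      omega
  rw [← hsp] at hφ
  simp only [Matrix.range_cons, Matrix.range_empty, Set.union_empty, Set.singleton_union] at hφ
  obtain ⟨a, b, rfl⟩ := Submodule.mem_span_pair.1 hφ
  simp only [LinearMap.add_apply, LinearMap.smul_apply, hA, hB, hy21, hφ2y,
      smul_eq_mul, mul_one, mul_zero, add_zero, zero_add]

/-- three points on a line -/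
lemma three_points {N : Submodule K V} {φ1 φ2 : Dual K V} {y1 y2 : V}
    (hφ1 : φ1 ∈ N.dualAnnihilator) (hφ2 : φ2 ∈ N.dualAnnihilator)
    (h11 : φ1 y1 = 1) (h12 : φ1 y2 = 0) (h21 : φ2 y1 = 0) (h22 : φ2 y2 = 1)
    {x1 x2 x3 : U} (a : K)
    (e1 : ∀ w : W, φ1 (v0 + G w) = φ1 ((s0 + (w : U →ₗ[K] V)) x1))
    (e2 : ∀ w : W, φ2 (v0 + G w) = φ2 ((s0 + (w : U →ₗ[K] V)) x2))
    (e3 : ∀ w : W, (a • φ1 + (1 - a) • φ2) (v0 + G w)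
      = (a • φ1 + (1 - a) • φ2) ((s0 + (w : U →ₗ[K] V)) x3)) :
    ∃ t ∈ TN W N, t y1 = a • (x3 - x1) ∧ t y2 = (1 - a) • (x3 - x2) := by
  refine ⟨φ1.smulRight (a • (x3 - x1)) + φ2.smulRight ((1 - a) • (x3 - x2)), ⟨?_, ?_⟩, ?_, ?_⟩
  · intro s hs
    rw [LinearMap.comp_add, map_add, trace_rank_one, trace_rank_one]
    have a1 := e1 ⟨s, hs⟩
    have a2 := e2 ⟨s, hs⟩
    have a3 := e3 ⟨s, hs⟩
    have b1 := e1 0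
    have b2 := e2 0
    have b3 := e3 0
    simp only [LinearMap.add_apply, LinearMap.smul_apply, map_add, map_sub, map_smul, smul_eq_mul,
      Submodule.coe_zero, LinearMap.zero_apply, map_zero, add_zero] at a1 a2 a3 b1 b2 b3 ⊢
    linear_combination a * a1 + (1 - a) * a2 - a3 - a * b1 - (1 - a) * b2 + b3
  · intro y hy
    simp [(Submodule.mem_dualAnnihilator φ1).1 hφ1 y hy,
      (Submodule.mem_dualAnnihilator φ2).1 hφ2 y hy]
  · simp [h11, h21]
  · simp [h12, h22]

lemma loc_of_frame {N : Submodule K V} {φ1 φ2 : Dual K V} {y1 y2 : V}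
    (hall : ∀ φ ∈ N.dualAnnihilator, φ = φ y1 • φ1 + φ y2 • φ2) {x : U}
    (e1 : ∀ w : W, φ1 (v0 + G w) = φ1 ((s0 + (w : U →ₗ[K] V)) x))
    (e2 : ∀ w : W, φ2 (v0 + G w) = φ2 ((s0 + (w : U →ₗ[K] V)) x)) : Loc W s0 G v0 N := by
  refine ⟨x, fun φ hφ w => ?_⟩
  rw [hall φ hφ]
  simp only [LinearMap.add_apply (φ y1 • φ1), LinearMap.smul_apply _ φ1, LinearMap.smul_apply _ φ2]
  rw [e1, e2]

lemma base_two (hq : QC W s0 G v0 d) (hK : ∃ c : K, c ≠ 0 ∧ c ≠ 1) {N : Submodule K V}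
    (hk : finrank K N + 2 = finrank K V) (hd : d ∉ N) (hT : TN W N = ⊥) : Loc W s0 G v0 N := by
  obtain ⟨a, ha0, ha1⟩ := hK
  obtain ⟨φ1, φ2, y1, y2, hφ1, hφ2, hd1, hd2, h11, h12, h21, h22, hall⟩ := frame hk hd
  have key : ∀ φ : Dual K V, φ ∈ N.dualAnnihilator → φ d = 1 →
      ∃ x : U, ∀ w : W, φ (v0 + G w) = φ ((s0 + (w : U →ₗ[K] V)) x) := by
    intro φ hφ hφd
    refine solve hq φ (by rw [hφd]; exact one_ne_zero) fun x hx => ?_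
    have := rank_one_mem hx hφ
    rw [hT, Submodule.mem_bot] at this
    have := LinearMap.congr_fun this d
    simpa [hφd] using this
  obtain ⟨x1, e1⟩ := key φ1 hφ1 hd1
  obtain ⟨x2, e2⟩ := key φ2 hφ2 hd2
  obtain ⟨x3, e3⟩ := key (a • φ1 + (1 - a) • φ2)
    (Submodule.add_mem _ (Submodule.smul_mem _ _ hφ1) (Submodule.smul_mem _ _ hφ2))
    (by simp [hd1, hd2])
  obtain ⟨t, ht, t1, t2⟩ := three_points hφ1 hφ2 h11 h12 h21 h22 a e1 e2 e3
  rw [hT, Submodule.mem_bot] at ht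
  rw [ht, LinearMap.zero_apply, eq_comm, smul_eq_zero_iff_right ha0, sub_eq_zero] at t1
  rw [ht, LinearMap.zero_apply, eq_comm, smul_eq_zero_iff_right (sub_ne_zero.2 ha1.symm),
    sub_eq_zero] at t2
  subst t1 t2
  exact loc_of_frame hall e1 e2

lemma notMem_swap {N : Submodule K V} {y : V} (hd : d ∉ N) (hy : y ∉ N ⊔ K ∙ d) :
    d ∉ N ⊔ K ∙ y := by
  intro h
  obtain ⟨n, hn, b, hb, e⟩ := Submodule.mem_sup.1 h
  obtain ⟨c, rfl⟩ := Submodule.mem_span_singleton.1 hb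
  by_cases hc : c = 0
  · apply hd
    rw [← e, hc]
    simpa using hn
  · apply hy
    rw [← Submodule.smul_mem_iff _ hc]
    have : c • y = d - n := by rw [← e]; simp
    rw [this]
    exact Submodule.sub_mem _ (Submodule.mem_sup_right (Submodule.mem_span_singleton_self d))
      (Submodule.mem_sup_left hn)

lemma thm1 (hq : QC W s0 G v0 d) (hK : ∃ c : K, c ≠ 0 ∧ c ≠ 1) (k : ℕ) (hk2 : 2 ≤ k) :
    ∀ N : Submodule K V, finrank K N + k = finrank K V → d ∉ N → finrank K (TN W N) + 2 ≤ k →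
      Loc W s0 G v0 N := by
  induction k, hk2 using Nat.le_induction with
  | base =>
    intro N hk hd hT
    exact base_two hq hK hk hd (Submodule.finrank_eq_zero.1 (by omega))
  | succ k hk2 ih =>
    intro N hk hd hT
    -- a nonzero functional
    obtain ⟨ψ, hψ0, hψ⟩ : ∃ ψ : Dual K V, ψ ≠ 0 ∧
        ∀ y, ψ y ≠ 0 → finrank K (TN W (N ⊔ K ∙ y)) + 2 ≤ k := by
      by_cases h : finrank K (TN W N) + 2 ≤ k
      · obtain ⟨f, hfd, -⟩ := Submodule.exists_le_ker_of_notMem hd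
        refine ⟨f, fun h => hfd (by rw [h]; rfl), fun y _ => ?_⟩
        have := Submodule.finrank_mono (TN_anti W (le_sup_left : N ≤ N ⊔ K ∙ y))
        omega
      · have hne : TN W N ≠ ⊥ := by
          intro h0
          rw [h0, finrank_bot] at h
          omega
        obtain ⟨t, ht, ht0⟩ := Submodule.exists_mem_ne_zero_of_ne_bot hne
        obtain ⟨y0, hy0⟩ : ∃ y0, t y0 ≠ 0 := by
          by_contra! h0
          exact ht0 (LinearMap.ext h0)
        obtain ⟨f, hf⟩ : ∃ f : Dual K U, f (t y0) ≠ 0 := by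
          by_contra! h0
          exact hy0 ((forall_dual_apply_eq_zero_iff K _).1 h0)
        refine ⟨f ∘ₗ t, fun h0 => hf (LinearMap.congr_fun h0 y0), fun y hy => ?_⟩
        have hlt : TN W (N ⊔ K ∙ y) < TN W N := by
          refine lt_of_le_of_ne (TN_anti W le_sup_left) fun he => hy ?_
          rw [← he] at ht
          have := ht.2 y (Submodule.mem_sup_right (Submodule.mem_span_singleton_self y))
          simp [this]
        have := Submodule.finrank_lt_finrank_of_lt hlt
        omega
    have hker : LinearMap.ker ψ ≠ ⊤ := fun h => hψ0 (LinearMap.ker_eq_top.1 h)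
    have hsp : ∀ (M : Submodule K V) (y : V), finrank K ↥(M ⊔ K ∙ y) ≤ finrank K M + 1 := by
      intro M y
      have h6 := Submodule.finrank_add_le_finrank_add_finrank M (K ∙ y)
      have h7 := finrank_sp_le (K := K) y
      omega
    have hne : ∀ M : Submodule K V, finrank K M < finrank K V → M ≠ ⊤ := by
      rintro M h rfl
      rw [finrank_top] at h
      omega
    have hst : ∀ y, y ∉ N → finrank K ↥(N ⊔ K ∙ y) + k = finrank K V := by
      intro y hy
      have hlt : N < N ⊔ K ∙ y := by
        refine lt_of_le_of_ne le_sup_left fun he => hy ?_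
        rw [he]
        exact Submodule.mem_sup_right (Submodule.mem_span_singleton_self y)
      have := Submodule.finrank_lt_finrank_of_lt hlt
      have := hsp N y
      omega
    obtain ⟨y1, hy1ψ, hy1⟩ := exists_notMem_two hker (hne (N ⊔ K ∙ d) (by have := hsp N d; omega))
    obtain ⟨y2, hy2ψ, hy2⟩ := exists_notMem_two hker (hne (N ⊔ (K ∙ d) ⊔ K ∙ y1) (by
      have := hsp N d
      have := hsp (N ⊔ K ∙ d) y1
      omega))
    have hy2d : y2 ∉ N ⊔ K ∙ d := fun h => hy2 (Submodule.mem_sup_left h)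
    have hy21 : y2 ∉ N ⊔ K ∙ y1 := fun h => hy2
      ((sup_le_sup_right (le_sup_left : N ≤ N ⊔ K ∙ d) (K ∙ y1)) h)
    refine combine hk hy21 (ih _ (hst _ fun h => hy1 (Submodule.mem_sup_left h))
      (notMem_swap hd hy1) (hψ y1 hy1ψ)) (ih _ (hst _ fun h => hy2d (Submodule.mem_sup_left h))
      (notMem_swap hd hy2d) (hψ y2 hy2ψ)) ?_
    have := hψ y1 hy1ψ
    omega

lemma special_dim {x : U} (hx : x ≠ 0) (hT : finrank K (TN W ⊥) + 1 = finrank K V)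
    (h : ∀ t ∈ TN W ⊥, ∀ y, t y ∈ K ∙ x) :
    finrank K (W.map (LinearMap.applyₗ x : (U →ₗ[K] V) →ₗ[K] V)) = 1 := by
  let j : Dual K V →ₗ[K] (V →ₗ[K] U) := LinearMap.smulRightₗ.flip x
  have hj : ∀ φ, j φ = φ.smulRight x := fun _ => rfl
  have hinj : Function.Injective j := by
    rw [injective_iff_map_eq_zero]
    intro φ hφ
    ext y
    have := LinearMap.congr_fun hφ y
    rw [hj] at this
    simpa [hx] using this
  set M := W.map (LinearMap.applyₗ x : (U →ₗ[K] V) →ₗ[K] V)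
  have he : M.dualAnnihilator.map j = TN W ⊥ := by
    apply le_antisymm
    · rintro _ ⟨φ, hφ, rfl⟩
      rw [hj]
      refine rank_one_mem (fun s hs => ?_) (by simp)
      exact (Submodule.mem_dualAnnihilator φ).1 hφ _ ⟨s, hs, rfl⟩
    · intro t ht
      obtain ⟨f, hf, -⟩ := Submodule.exists_le_ker_of_notMem
        (p := (⊥ : Submodule K U)) (v := x) (by simpa using hx)
      have htf : t = j ((f x)⁻¹ • f ∘ₗ t) := by
        ext y
        obtain ⟨c, hc⟩ := Submodule.mem_span_singleton.1 (h t ht y)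
        rw [hj]
        simp [← hc]
        field_simp
      refine ⟨(f x)⁻¹ • f ∘ₗ t, ?_, htf.symm⟩
      rw [SetLike.mem_coe, Submodule.mem_dualAnnihilator]
      rintro _ ⟨s, hs, rfl⟩
      have := ht.1 s hs
      rw [htf, hj, trace_rank_one] at this
      exact this
  have h1 := (Submodule.equivMapOfInjective j hinj M.dualAnnihilator).finrank_eq
  rw [he] at h1
  have h2 := Subspace.finrank_add_finrank_dualAnnihilator_eq M
  omega

lemma par_mem {u v : U} (hu : u ≠ 0)
    (h : ∀ f g : Dual K U, f u * g v = f v * g u) : v ∈ K ∙ u := by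
  obtain ⟨f, hf, -⟩ := Submodule.exists_le_ker_of_notMem
        (p := (⊥ : Submodule K U)) (v := u) (by simpa using hu)
  rw [Submodule.mem_span_singleton]
  refine ⟨(f u)⁻¹ * f v, ?_⟩
  rw [← sub_eq_zero, ← forall_dual_apply_eq_zero_iff K]
  intro g
  have := h f g
  rw [map_sub, map_smul, smul_eq_mul]
  field_simp
  linear_combination -this

/-- classification of operator spaces with all evaluations of rank at most one -/
lemma rank_one_class {T : Submodule K (V →ₗ[K] U)} (hT : 2 ≤ finrank K T)
    (h : ∀ s ∈ T, ∀ t ∈ T, ∀ y, ∀ f g : Dual K U, f (s y) * g (t y) = f (t y) * g (s y)) :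
    ∃ x : U, x ≠ 0 ∧ ∀ t ∈ T, ∀ y, t y ∈ K ∙ x := by
  have hpar : ∀ s ∈ T, ∀ t ∈ T, ∀ y, s y ≠ 0 → t y ∈ K ∙ (s y) := fun s hs t ht y hy =>
    par_mem hy (h s hs t ht y)
  have hne : T ≠ ⊥ := by
    rintro rfl
    rw [finrank_bot] at hT
    omega
  have hex : ∀ t : V →ₗ[K] U, t ≠ 0 → ∃ y, t y ≠ 0 := fun t ht => by
    by_contra! h0
    exact ht (LinearMap.ext h0)
  obtain ⟨s1, hs1, hs10⟩ := Submodule.exists_mem_ne_zero_of_ne_bot hne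
  obtain ⟨y1, hy1⟩ := hex s1 hs10
  by_contra! hcon
  obtain ⟨t2, ht2, y2, hy2⟩ := hcon (s1 y1) hy1
  have hx2 : t2 y2 ≠ 0 := fun h0 => hy2 (by rw [h0]; exact Submodule.zero_mem _)
  -- a nonzero element killing y1
  obtain ⟨t, ht, ht0, hty1⟩ : ∃ t ∈ T, t ≠ 0 ∧ t y1 = 0 := by
    have hlt : K ∙ s1 < T := by
      refine lt_of_le_of_ne ((Submodule.span_singleton_le_iff_mem _ _).2 hs1) fun he => ?_
      rw [← he, finrank_span_singleton hs10] at hT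
      omega
    obtain ⟨r, hr, hr'⟩ := SetLike.exists_of_lt hlt
    obtain ⟨c, hc⟩ := Submodule.mem_span_singleton.1 (hpar s1 hs1 r hr y1 hy1)
    refine ⟨r - c • s1, T.sub_mem hr (T.smul_mem c hs1), fun h0 => hr' ?_, by simp [hc]⟩
    rw [sub_eq_zero.1 h0]
    exact Submodule.smul_mem _ _ (Submodule.mem_span_singleton_self _)
  -- it kills y2
  have hty2 : t y2 = 0 := by
    by_contra h0
    have h1 := hpar t ht t2 ht2 y2 h0
    have h2 := hpar t ht s1 hs1 (y1 + y2) (by simpa [hty1] using h0)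
    have h3 := hpar t ht s1 hs1 y2 h0
    rw [map_add, map_add, hty1, zero_add] at h2
    have h4 : s1 y1 ∈ K ∙ (t y2) := by simpa using Submodule.sub_mem _ h2 h3
    obtain ⟨c, hc⟩ := Submodule.mem_span_singleton.1 h4
    have hc0 : c ≠ 0 := by
      rintro rfl
      exact hy1 (by simpa using hc.symm)
    obtain ⟨b, hb⟩ := Submodule.mem_span_singleton.1 h1
    refine hy2 (Submodule.mem_span_singleton.2 ⟨b * c⁻¹, ?_⟩)
    rw [← hc, ← hb, smul_smul, mul_assoc, inv_mul_cancel₀ hc0, mul_one]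
  obtain ⟨y3, hy3⟩ := hex t ht0
  have key : ∀ s ∈ T, ∀ y, t y = 0 → s y ∈ K ∙ (t y3) := by
    intro s hs y hy
    have h2 := hpar t ht s hs (y + y3) (by simpa [hy] using hy3)
    have h3 := hpar t ht s hs y3 hy3
    rw [map_add, map_add, hy, zero_add] at h2
    simpa using Submodule.sub_mem _ h2 h3
  obtain ⟨c, hc⟩ := Submodule.mem_span_singleton.1 (key s1 hs1 y1 hty1)
  obtain ⟨b, hb⟩ := Submodule.mem_span_singleton.1 (key t2 ht2 y2 hty2)
  have hc0 : c ≠ 0 := by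
    rintro rfl
    exact hy1 (by simpa using hc.symm)
  refine hy2 (Submodule.mem_span_singleton.2 ⟨b * c⁻¹, ?_⟩)
  rw [← hc, ← hb, smul_smul, mul_assoc, inv_mul_cancel₀ hc0, mul_one]

lemma exists_good {T : Submodule K (V →ₗ[K] U)} (hK : ∃ c : K, c ≠ 0 ∧ c ≠ 1)
    (hT : 2 ≤ finrank K T)
    (hns : ¬ ∃ x : U, x ≠ 0 ∧ ∀ t ∈ T, ∀ y, t y ∈ K ∙ x) (E : Submodule K V) (hE : E ≠ ⊤) :
    ∃ y ∉ E, ∃ s ∈ T, ∃ t ∈ T, ∃ f g : Dual K U, f (s y) * g (t y) ≠ f (t y) * g (s y) := by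
  by_contra! hcon
  obtain ⟨c, hc0, hc1⟩ := hK
  apply hns
  apply rank_one_class hT
  intro s hs t ht y f g
  by_cases hy : y ∈ E
  · obtain ⟨z, -, hz⟩ := SetLike.exists_of_lt hE.lt_top
    have hyz : ∀ a : K, a ≠ 0 → y + a • z ∉ E := fun a ha h => hz (by
      have := E.sub_mem h hy
      rw [add_sub_cancel_left] at this
      exact (E.smul_mem_iff ha).1 this)
    have q1 := hcon _ (hyz 1 one_ne_zero) s hs t ht f g
    have q2 := hcon _ (hyz c hc0) s hs t ht f g
    have q3 := hcon z hz s hs t ht f g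
    simp only [map_add, map_smul, smul_eq_mul, one_mul] at q1 q2 q3
    have hc1' : c - 1 ≠ 0 := sub_ne_zero.2 hc1
    apply mul_left_cancel₀ hc1'
    linear_combination c * q1 - q2 + (c ^ 2 - c) * q3
  · exact hcon y hy s hs t ht f g

lemma finrank_good (y : V) {s t : V →ₗ[K] U} (hs : s ∈ TN W ⊥) (ht : t ∈ TN W ⊥)
    {f g : Dual K U} (h : f (s y) * g (t y) ≠ f (t y) * g (s y)) :
    finrank K (TN W (⊥ ⊔ K ∙ y)) + 2 ≤ finrank K (TN W ⊥) := by
  let e : (V →ₗ[K] U) →ₗ[K] K := f ∘ₗ LinearMap.applyₗ y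
  have he : ∀ r, e r = f (r y) := fun _ => rfl
  have hy : y ∈ (⊥ : Submodule K V) ⊔ K ∙ y :=
    Submodule.mem_sup_right (Submodule.mem_span_singleton_self y)
  have h1 : TN W ⊥ ⊓ LinearMap.ker e < TN W ⊥ := by
    refine lt_of_le_of_ne inf_le_left fun h0 => h ?_
    have a1 : s ∈ TN W ⊥ ⊓ LinearMap.ker e := by rw [h0]; exact hs
    have a2 : t ∈ TN W ⊥ ⊓ LinearMap.ker e := by rw [h0]; exact ht
    have b1 : f (s y) = 0 := a1.2
    have b2 : f (t y) = 0 := a2.2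
    rw [b1, b2, zero_mul, zero_mul]
  have h2 : TN W (⊥ ⊔ K ∙ y) < TN W ⊥ ⊓ LinearMap.ker e := by
    refine lt_of_le_of_ne (le_inf (TN_anti W le_sup_left) fun r hr => ?_) fun h0 => h ?_
    · rw [LinearMap.mem_ker, he, hr.2 y hy, map_zero]
    · have a1 : f (s y) • t - f (t y) • s ∈ TN W (⊥ ⊔ K ∙ y) := by
        rw [h0]
        refine ⟨Submodule.sub_mem _ (Submodule.smul_mem _ _ ht) (Submodule.smul_mem _ _ hs), ?_⟩
        rw [SetLike.mem_coe, LinearMap.mem_ker, he]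
        simp
        ring
      have a2 := congrArg g (a1.2 y hy)
      simp at a2
      linear_combination a2
  have := Submodule.finrank_lt_finrank_of_lt h1
  have := Submodule.finrank_lt_finrank_of_lt h2
  omega

lemma thm2 (hq : QC W s0 G v0 d) (hd : d ≠ 0) (hK : ∃ c : K, c ≠ 0 ∧ c ≠ 1)
    (hn : 3 ≤ finrank K V) (hT : finrank K (TN W ⊥) + 1 = finrank K V)
    (hns : ¬ ∃ x : U, x ≠ 0 ∧ ∀ t ∈ TN W ⊥, ∀ y, t y ∈ K ∙ x) : Loc W s0 G v0 ⊥ := by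
  have hne : ∀ M : Submodule K V, finrank K M < finrank K V → M ≠ ⊤ := by
    rintro M h rfl
    rw [finrank_top] at h
    omega
  have hd' : d ∉ (⊥ : Submodule K V) := by simpa using hd
  have hs1 := finrank_sp_le (K := K) d
  obtain ⟨y1, hy1, a, ha, b, hb, f, g, h1⟩ := exists_good hK (by omega) hns (⊥ ⊔ K ∙ d)
    (hne _ (by rw [bot_sup_eq]; omega))
  obtain ⟨y2, hy2, a', ha', b', hb', f', g', h2⟩ := exists_good hK (by omega) hns
    ((⊥ ⊔ K ∙ d) ⊔ K ∙ y1) (hne _ (by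
      have h6 := Submodule.finrank_add_le_finrank_add_finrank (⊥ ⊔ K ∙ d) (K ∙ y1)
      have := finrank_sp_le (K := K) y1
      rw [bot_sup_eq] at h6 ⊢
      omega))
  have hy2d : y2 ∉ ⊥ ⊔ K ∙ d := fun h => hy2 (Submodule.mem_sup_left h)
  have hy21 : y2 ∉ ⊥ ⊔ K ∙ y1 := fun h => hy2
      ((sup_le_sup_right (bot_le : ⊥ ≤ ⊥ ⊔ K ∙ d) (K ∙ y1)) h)
  have r1 := finrank_good y1 ha hb h1
  have r2 := finrank_good y2 ha' hb' h2
  have key : ∀ y, y ∉ ⊥ ⊔ K ∙ d → finrank K (TN W (⊥ ⊔ K ∙ y)) + 2 ≤ finrank K (TN W ⊥) →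
      Loc W s0 G v0 (⊥ ⊔ K ∙ y) := by
    intro y hy hr
    have hy0 : y ≠ 0 := by
      rintro rfl
      exact hy (Submodule.zero_mem _)
    refine thm1 hq hK (finrank K V - 1) (by omega) _ ?_ (notMem_swap hd' hy) (by omega)
    rw [bot_sup_eq, finrank_span_singleton hy0]
    omega
  exact combine (k := finrank K V) (by simp) hy21 (key _ hy1 r1) (key _ hy2d r2) (by omega)

lemma thm2_two (hq : QC W s0 G v0 d) (hd : d ≠ 0)
    (hK : ∃ a b : K, a ≠ 0 ∧ a ≠ 1 ∧ b ≠ 0 ∧ b ≠ 1 ∧ a ≠ b)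
    (hn : finrank K V = 2) (hT : finrank K (TN W ⊥) + 1 = finrank K V)
    (hns : ¬ ∃ x : U, x ≠ 0 ∧ ∀ t ∈ TN W ⊥, ∀ y, t y ∈ K ∙ x) : Loc W s0 G v0 ⊥ := by
  obtain ⟨a, b, ha0, ha1, hb0, hb1, hab⟩ := hK
  have hd' : d ∉ (⊥ : Submodule K V) := by simpa using hd
  obtain ⟨φ1, φ2, y1, y2, hφ1, hφ2, hd1, hd2, h11, h12, h21, h22, hall⟩ :=
    frame (N := ⊥) (by simp [hn]) hd'
  have h1 : finrank K (TN W ⊥) = 1 := by omega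
  have hone : ∀ t ∈ TN W ⊥, t ≠ 0 → ∀ r ∈ TN W ⊥, ∃ c : K, c • t = r := by
    intro t ht ht0 r hr
    have h := (finrank_eq_one_iff_of_nonzero' (⟨t, ht⟩ : TN W ⊥)
      (by simpa [Subtype.ext_iff] using ht0)).1 h1 ⟨r, hr⟩
    obtain ⟨c, hc⟩ := h
    exact ⟨c, congrArg Subtype.val hc⟩
  have key : ∀ φ : Dual K V, φ d = 1 →
      ∃ x : U, ∀ w : W, φ (v0 + G w) = φ ((s0 + (w : U →ₗ[K] V)) x) := by
    intro φ hφd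
    refine solve hq φ (by rw [hφd]; exact one_ne_zero) fun x hx => ?_
    by_contra hx0
    apply hns
    refine ⟨x, hx0, fun t ht y => ?_⟩
    have hm : φ.smulRight x ∈ TN W ⊥ := rank_one_mem hx (by simp)
    obtain ⟨c, rfl⟩ := hone _ hm (fun h0 => hx0 (by
      have := LinearMap.congr_fun h0 d
      simpa [hφd] using this)) t ht
    exact Submodule.mem_span_singleton.2 ⟨c * φ y, by simp [mul_smul]⟩
  obtain ⟨x1, e1⟩ := key φ1 hd1
  obtain ⟨x2, e2⟩ := key φ2 hd2
  obtain ⟨xa, ea⟩ := key (a • φ1 + (1 - a) • φ2) (by simp [hd1, hd2])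
  obtain ⟨xb, eb⟩ := key (b • φ1 + (1 - b) • φ2) (by simp [hd1, hd2])
  obtain ⟨ta, hta, ta1, ta2⟩ := three_points hφ1 hφ2 h11 h12 h21 h22 a e1 e2 ea
  obtain ⟨tb, htb, tb1, tb2⟩ := three_points hφ1 hφ2 h11 h12 h21 h22 b e1 e2 eb
  have ha1' : 1 - a ≠ 0 := sub_ne_zero.2 ha1.symm
  have hb1' : 1 - b ≠ 0 := sub_ne_zero.2 hb1.symm
  have hx12 : x1 = x2 := by
    by_cases hta0 : ta = 0
    · rw [hta0, LinearMap.zero_apply, eq_comm, smul_eq_zero_iff_right ha0, sub_eq_zero] at ta1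
      rw [hta0, LinearMap.zero_apply, eq_comm, smul_eq_zero_iff_right ha1', sub_eq_zero] at ta2
      rw [← ta1, ← ta2]
    · obtain ⟨c, rfl⟩ := hone ta hta hta0 tb htb
      rw [LinearMap.smul_apply, ta1] at tb1
      rw [LinearMap.smul_apply, ta2] at tb2
      -- subtracting: a relation between `ta y1` and `ta y2`
      have q1 : xa - x1 = a⁻¹ • ta y1 := by rw [ta1, smul_smul, inv_mul_cancel₀ ha0, one_smul]
      have q2 : xa - x2 = (1 - a)⁻¹ • ta y2 := by
        rw [ta2, smul_smul, inv_mul_cancel₀ ha1', one_smul]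
      have q3 : xb - x1 = (b⁻¹ * c) • ta y1 := by
        rw [ta1, mul_smul, tb1, smul_smul, inv_mul_cancel₀ hb0, one_smul]
      have q4 : xb - x2 = ((1 - b)⁻¹ * c) • ta y2 := by
        rw [ta2, mul_smul, tb2, smul_smul, inv_mul_cancel₀ hb1', one_smul]
      have q5 : (a⁻¹ - b⁻¹ * c) • ta y1 = ((1 - a)⁻¹ - (1 - b)⁻¹ * c) • ta y2 := by
        rw [sub_smul, sub_smul, ← q1, ← q2, ← q3, ← q4]
        abel
      exfalso
      have hdec : ∀ y, y = φ1 y • y1 + φ2 y • y2 := by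
        intro y
        rw [← sub_eq_zero, ← forall_dual_apply_eq_zero_iff K]
        intro φ
        have := LinearMap.congr_fun (hall φ (by simp)) y
        simp only [LinearMap.add_apply, LinearMap.smul_apply, smul_eq_mul] at this
        simp only [map_sub, map_add, map_smul, smul_eq_mul]
        linear_combination this
      have hr : ∀ r ∈ TN W ⊥, ∀ x : U, ta y1 ∈ K ∙ x → ta y2 ∈ K ∙ x → ∀ y, r y ∈ K ∙ x := by
        intro r hr x m1 m2 y
        obtain ⟨e, rfl⟩ := hone ta hta hta0 r hr
        rw [hdec y]
        simp only [LinearMap.smul_apply, map_add, map_smul]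
        exact Submodule.add_mem _ (Submodule.smul_mem _ _ (Submodule.smul_mem _ _ m1))
          (Submodule.smul_mem _ _ (Submodule.smul_mem _ _ m2))
      have hfin : ∀ x : U, ta y1 ∈ K ∙ x → ta y2 ∈ K ∙ x → False := by
        intro x m1 m2
        refine hns ⟨x, ?_, fun r hr' => hr r hr' x m1 m2⟩
        rintro rfl
        apply hta0
        ext y
        simpa using hr ta hta 0 m1 m2 y
      by_cases z1 : a⁻¹ - b⁻¹ * c = 0
      · by_cases z2 : (1 - a)⁻¹ - (1 - b)⁻¹ * c = 0
        · apply hab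
          field_simp at z1 z2
          have : c = 1 := by linear_combination -z1 - z2
          rw [this] at z1
          linear_combination -z1
        · refine hfin (ta y1) (Submodule.mem_span_singleton_self _) ?_
          rw [← Submodule.smul_mem_iff _ z2, ← q5]
          exact Submodule.smul_mem _ _ (Submodule.mem_span_singleton_self _)
      · refine hfin (ta y2) ?_ (Submodule.mem_span_singleton_self _)
        rw [← Submodule.smul_mem_iff _ z1, q5]
        exact Submodule.smul_mem _ _ (Submodule.mem_span_singleton_self _)
  subst hx12
  exact loc_of_frame hall e1 e2

end

end QRC

attribute [local instance] AffineSubspace.toAddTorsor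


/-- Let `𝒮` be an affine subspace of `L(U,V)` with
`codim 𝒮 = dim V − 1`. Assume that either `dim V ≥ 3` and `K` has more than 2 elements,
or `dim V ≥ 2` and `K` has more than 3 elements. Then either every
quasi-range-compatible affine map `F : 𝒮 → V` is local, or there is a vector `x ∈ U`
such that the affine subspace `𝒮x = {s x : s ∈ 𝒮}` of `V` has dimension 1 (i.e. its
direction has dimension 1). -/
theorem quasi_range_compatible_affine_maps_local_or_special
    (K U V : Type*) [Field K]
    [AddCommGroup U] [Module K U] [FiniteDimensional K U]
    [AddCommGroup V] [Module K V] [FiniteDimensional K V]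
    (𝒮 : AffineSubspace K (U →ₗ[K] V)) [Nonempty ↥𝒮]
    (hcodim : Module.finrank K (U →ₗ[K] V) + 1 =
      Module.finrank K 𝒮.direction + Module.finrank K V)
    (hcase : (3 ≤ Module.finrank K V ∧ 2 < Cardinal.mk K) ∨
      (2 ≤ Module.finrank K V ∧ 3 < Cardinal.mk K)) :
    (∀ F : ↥𝒮 →ᵃ[K] V,
      (∃ D : Submodule K V, Module.finrank K D = 1 ∧
        ∀ s : ↥𝒮, ¬ D ≤ LinearMap.range (s : U →ₗ[K] V) →
          F s ∈ LinearMap.range (s : U →ₗ[K] V)) →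
      ∃ x : U, ∀ s : ↥𝒮, F s = (s : U →ₗ[K] V) x) ∨
    (∃ x : U, Module.finrank K
      (AffineSubspace.map (LinearMap.applyₗ x).toAffineMap 𝒮).direction = 1) := by

  classical
  obtain ⟨s0⟩ := ‹Nonempty ↥𝒮›
  have hn2 : 2 ≤ Module.finrank K V := by omega
  have hT : Module.finrank K (QRC.TN 𝒮.direction ⊥) + 1 = Module.finrank K V := by
    have := QRC.finrank_TN_bot 𝒮.direction
    omega
  by_cases hns : ∃ x : U, x ≠ 0 ∧ ∀ t ∈ QRC.TN 𝒮.direction ⊥, ∀ y, t y ∈ Submodule.span K {x}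
  · right
    obtain ⟨x, hx0, hx⟩ := hns
    refine ⟨x, ?_⟩
    rw [AffineSubspace.map_direction]
    exact QRC.special_dim hx0 hT hx
  · left
    rintro F ⟨D, hD, hF⟩
    obtain ⟨⟨d, hdD⟩, hd0, hdall⟩ := finrank_eq_one_iff'.1 hD
    have hd : d ≠ 0 := fun h => hd0 (Subtype.ext h)
    have hq : QRC.QC 𝒮.direction (s0 : U →ₗ[K] V) F.linear (F s0) d := by
      intro w φ hφd hφ
      have hs : (w +ᵥ s0 : ↥𝒮).1 = (s0 : U →ₗ[K] V) + (w : U →ₗ[K] V) := add_comm _ _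
      have h1 := hF (w +ᵥ s0) (fun hle => by
        obtain ⟨u, hu⟩ := hle hdD
        rw [hs] at hu
        apply hφd
        rw [← hu]
        exact LinearMap.congr_fun hφ u)
      obtain ⟨u, hu⟩ := h1
      rw [F.map_vadd, hs] at hu
      have h2 : F s0 + F.linear w = F.linear w +ᵥ F s0 := add_comm _ _
      rw [h2, ← hu]
      exact LinearMap.congr_fun hφ u
    have hloc : QRC.Loc 𝒮.direction (s0 : U →ₗ[K] V) F.linear (F s0) ⊥ := by
      have hK3 : 2 < Cardinal.mk K → ∃ c : K, c ≠ 0 ∧ c ≠ 1 := by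
        intro h
        obtain ⟨z, hz⟩ := Cardinal.exists_notMem_of_length_lt [(0 : K), 1] (by simpa using h)
        exact ⟨z, by simpa using hz⟩
      have h23 : (2 : Cardinal) < 3 := by exact_mod_cast (by norm_num : (2 : ℕ) < 3)
      by_cases hn3 : 3 ≤ Module.finrank K V
      · refine QRC.thm2 hq hd (hK3 ?_) hn3 hT hns
        rcases hcase with h | h
        · exact h.2
        · exact h23.trans h.2
      · have h3 : 3 < Cardinal.mk K := by
          rcases hcase with h | h
          · exact absurd h.1 hn3
          · exact h.2
        obtain ⟨a, ha0, ha1⟩ := hK3 (h23.trans h3)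
        obtain ⟨b, hb⟩ := Cardinal.exists_notMem_of_length_lt [(0 : K), 1, a] (by simpa using h3)
        simp only [List.mem_cons, List.not_mem_nil, or_false, not_or] at hb
        exact QRC.thm2_two hq hd ⟨a, b, ha0, ha1, hb.1, hb.2.1, fun h => hb.2.2 h.symm⟩
          (by omega) hT hns
    obtain ⟨x, hx⟩ := hloc
    refine ⟨x, fun s => ?_⟩
    rw [← sub_eq_zero, ← Module.forall_dual_apply_eq_zero_iff K]
    intro φ
    have h1 := hx φ (by simp) (s -ᵥ s0)
    have hs : ((s0 : U →ₗ[K] V) + ((s -ᵥ s0 : 𝒮.direction) : U →ₗ[K] V)) = s := by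
      have : ((s -ᵥ s0 : 𝒮.direction) : U →ₗ[K] V) = (s : U →ₗ[K] V) - s0 := rfl
      rw [this]; abel
    have hFs : F s0 + F.linear (s -ᵥ s0) = F s := by
      rw [F.linearMap_vsub]
      exact add_sub_cancel _ _
    rw [hs, hFs] at h1
    rw [map_sub, h1, sub_self]
end

section
/- Let K be a field with more than 2 elements, U and V finite-dimensional K-vector spaces with dim V ≥ 2, and 𝒮 an affine subspace of L(U,V) with codim 𝒮 = dim V − 1. Assume there is a vector x ∈ U such that the affine subspace 𝒮x = {s(x) : s ∈ 𝒮} of V has dimension 1 and is not a linear subspace of V. Let F : 𝒮 → V be a non-local affine map that is quasi-range-compatible with respect to some 1-dimensional linear subspace D₀ of V. Then: (i) K has exactly 3 elements; (ii) D₀ ∩ 𝒮x ≠ ∅; (iii) there is a vector x' ∈ U such that F(s) − s(x') ∈ span(𝒮x) for all s ∈ 𝒮; (iv) if dim V > 2, then there exist a K-linear endomorphism ψ of span(𝒮x) and a vector x' ∈ U such that F(s) = ψ(s(x)) + s(x') for all s ∈ 𝒮. -/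
namespace QRC

open Module

variable {K U V : Type*} [Field K] [AddCommGroup U] [Module K U] [AddCommGroup V] [Module K V]

lemma three_eig {v d : V} (hli : ∀ a b : K, a • v + b • d = 0 → a = 0 ∧ b = 0)
    (g : V →ₗ[K] V) {t₁ t₂ t₃ : K} (h12 : t₁ ≠ t₂) (h13 : t₁ ≠ t₃) (h23 : t₂ ≠ t₃)
    (h1 : ∃ c : K, g (v + t₁ • d) = c • (v + t₁ • d))
    (h2 : ∃ c : K, g (v + t₂ • d) = c • (v + t₂ • d))
    (h3 : ∃ c : K, g (v + t₃ • d) = c • (v + t₃ • d)) :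
    ∃ c : K, g v = c • v ∧ g d = c • d := by
  obtain ⟨c₁, h1⟩ := h1
  obtain ⟨c₂, h2⟩ := h2
  obtain ⟨c₃, h3⟩ := h3
  simp only [map_add, map_smul] at h1 h2 h3
  have key := hli ((t₂ - t₃) * c₁ + (t₃ - t₁) * c₂ + (t₁ - t₂) * c₃)
    ((t₂ - t₃) * c₁ * t₁ + (t₃ - t₁) * c₂ * t₂ + (t₁ - t₂) * c₃ * t₃) (by
      linear_combination (norm := module) -(t₂ - t₃) • h1 - (t₃ - t₁) • h2 - (t₁ - t₂) • h3)
  obtain ⟨k1, k2⟩ := key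
  have hc : c₁ = c₂ := by
    have : (t₂ - t₃) * (t₁ - t₃) * (c₁ - c₂) = 0 := by
      linear_combination k2 - t₃ * k1
    have h' : (t₂ - t₃) * (t₁ - t₃) ≠ 0 := mul_ne_zero (sub_ne_zero.2 h23) (sub_ne_zero.2 h13)
    exact sub_eq_zero.1 ((mul_eq_zero.1 this).resolve_left h')
  subst hc
  have hd : g d = c₁ • d := by
    have : (t₁ - t₂) • (g d - c₁ • d) = 0 := by
      linear_combination (norm := module) h1 - h2
    exact sub_eq_zero.1 ((smul_eq_zero.1 this).resolve_left (sub_ne_zero.2 h12))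
  refine ⟨c₁, ?_, hd⟩
  rw [hd] at h1
  linear_combination (norm := module) h1

/-- eigen outside P ∪ D₀ implies scalar. -/
lemma scalar_of {v d δ : V} (hli : ∀ a b : K, a • v + b • d = 0 → a = 0 ∧ b = 0)
    (hc : ∃ c : K, c ≠ 0 ∧ c ≠ 1) (hy : ∃ y : V, ∀ a b : K, a • v + b • d ≠ y)
    (g : V →ₗ[K] V)
    (hg : ∀ y : V, (∀ a b : K, a • v + b • d ≠ y) → (∀ a : K, a • y ≠ δ) → ∃ c : K, g y = c • y)
    (hδ : δ ≠ 0) :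
    ∃ c : K, ∀ y, g y = c • y := by
  -- three-independence
  have h3 : ∀ y : V, (∀ a b : K, a • v + b • d ≠ y) → ∀ a b c : K,
      a • v + b • d + c • y = 0 → a = 0 ∧ b = 0 ∧ c = 0 := by
    intro y hy a b c h
    have hc : c = 0 := by
      by_contra hc
      apply hy (-(c⁻¹ * a)) (-(c⁻¹ * b))
      have : c⁻¹ • (a • v + b • d + c • y) = 0 := by rw [h, smul_zero]
      rw [smul_add, inv_smul_smul₀ hc] at this
      linear_combination (norm := module) -this
    subst hc
    have := hli a b (by simpa using h)
    exact ⟨this.1, this.2, rfl⟩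
  -- step A
  have hA : ∀ y : V, (∀ a b : K, a • v + b • d ≠ y) → ∀ p q : K, ∀ l : K, g y = l • y →
      (∀ a b : K, a • y + b • (p • v + q • d) ≠ δ) →
      g (p • v + q • d) = l • (p • v + q • d) := by
    intro y hy p q l hl hδy
    obtain ⟨c, hc0, hc1⟩ := hc
    by_cases hpq : p = 0 ∧ q = 0
    · simp [hpq.1, hpq.2]
    have hne : ∀ e : K, ∃ m : K, g (y + e • (p • v + q • d)) = m • (y + e • (p • v + q • d)) := by
      intro e
      apply hg
      · intro a b hab
        apply hy (a - e * p) (b - e * q)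
        linear_combination (norm := module) hab
      · intro a ha
        apply hδy a (a * e)
        rw [← ha]; module
    obtain ⟨m, hm⟩ := hne 1
    obtain ⟨k, hk⟩ := hne c
    simp only [map_add g y, map_smul g _ (p • v + q • d), hl] at hm hk
    have hz : g (p • v + q • d) = m • (p • v + q • d) + (m - l) • y := by
      linear_combination (norm := module) hm
    rw [hz] at hk
    have := h3 y hy ((c * m - k * c) * p) ((c * m - k * c) * q) (l + c * (m - l) - k) (by
      linear_combination (norm := module) hk)
    obtain ⟨e1, e2, e3⟩ := this
    have hmk : c * m - k * c = 0 := by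
      by_contra hne
      exact hpq ⟨(mul_eq_zero.1 e1).resolve_left hne, (mul_eq_zero.1 e2).resolve_left hne⟩
    have hmk : m = k := by
      have : c * (m - k) = 0 := by linear_combination hmk
      exact sub_eq_zero.1 ((mul_eq_zero.1 this).resolve_left hc0)
    subst hmk
    have : (c - 1) * (m - l) = 0 := by linear_combination e3
    have := sub_eq_zero.1 ((mul_eq_zero.1 this).resolve_left (sub_ne_zero.2 hc1))
    subst this
    rw [hz]; simp
  -- step B
  have hB : ∀ y : V, (∀ a b : K, a • v + b • d ≠ y) → (∀ a : K, a • y ≠ δ) →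
      ∀ l : K, g y = l • y → g v = l • v ∧ g d = l • d := by
    intro y hy hyδ l hl
    have two : ∀ p q p' q' : K, p * q' - p' * q ≠ 0 →
        (∀ a b : K, a • y + b • (p • v + q • d) ≠ δ) ∨
        (∀ a b : K, a • y + b • (p' • v + q' • d) ≠ δ) := by
      intro p q p' q' hdet
      by_contra! hcon
      obtain ⟨⟨a, b, h⟩, ⟨a', b', h'⟩⟩ := hcon
      obtain ⟨e1, e2, e3⟩ := h3 y hy (b * p - b' * p') (b * q - b' * q') (a - a') (by
        linear_combination (norm := module) h - h')
      have : b * (p * q' - p' * q) = 0 := by linear_combination q' * e1 - p' * e2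
      have hb : b = 0 := (mul_eq_zero.1 this).resolve_right hdet
      subst hb
      exact hyδ a (by simpa using h)
    have hAv : (∀ a b : K, a • y + b • ((1:K) • v + (0:K) • d) ≠ δ) → g v = l • v := by
      intro h
      simpa using hA y hy 1 0 l hl h
    have hAd : (∀ a b : K, a • y + b • ((0:K) • v + (1:K) • d) ≠ δ) → g d = l • d := by
      intro h
      simpa using hA y hy 0 1 l hl h
    have hAs : (∀ a b : K, a • y + b • ((1:K) • v + (1:K) • d) ≠ δ) →
        g v + g d = l • v + l • d := by
      intro h
      simpa using hA y hy 1 1 l hl h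
    rcases two 1 0 0 1 (by simp) with h | h
    · have hv := hAv h
      refine ⟨hv, ?_⟩
      rcases two 0 1 1 1 (by simp) with h' | h'
      · exact hAd h'
      · have := hAs h'
        rw [hv] at this
        exact add_left_cancel this
    · have hd := hAd h
      refine ⟨?_, hd⟩
      rcases two 1 0 1 1 (by simp) with h' | h'
      · exact hAv h'
      · have := hAs h'
        rw [hd] at this
        exact add_right_cancel this
  have hv0 : v ≠ 0 := by
    rintro rfl
    have := hli 1 0 (by simp)
    simp at this
  -- step D : shift by v
  have hD : ∀ y : V, (∀ a b : K, a • v + b • d ≠ y) → (∃ a : K, a • y = δ) →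
      (∀ a b : K, a • v + b • d ≠ y + v) ∧ (∀ a : K, a • (y + v) ≠ δ) := by
    rintro y hy ⟨a, ha⟩
    have ha0 : a ≠ 0 := by rintro rfl; exact hδ (by simpa using ha.symm)
    constructor
    · intro a b h
      apply hy (a - 1) b
      linear_combination (norm := module) h
    · intro b hb
      obtain ⟨e1, e2, e3⟩ := h3 y hy b 0 (b - a) (by linear_combination (norm := module) hb - ha)
      subst e1
      exact ha0 (by linear_combination -e3)
  obtain ⟨y₀, hy₀, hy₀δ⟩ : ∃ y : V, (∀ a b : K, a • v + b • d ≠ y) ∧ (∀ a : K, a • y ≠ δ) := by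
    obtain ⟨y, hy⟩ := hy
    by_cases h : ∃ a : K, a • y = δ
    · exact ⟨_, hD y hy h⟩
    · push Not at h
      exact ⟨y, hy, h⟩
  obtain ⟨l, hl⟩ := hg y₀ hy₀ hy₀δ
  obtain ⟨hlv, hld⟩ := hB y₀ hy₀ hy₀δ l hl
  have hE : ∀ y : V, (∀ a b : K, a • v + b • d ≠ y) → (∀ a : K, a • y ≠ δ) → g y = l • y := by
    intro y hy hyδ
    obtain ⟨l', hl'⟩ := hg y hy hyδ
    have := (hB y hy hyδ l' hl').1
    rw [hlv] at this
    rw [hl', smul_left_injective K hv0 this]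
  refine ⟨l, fun y => ?_⟩
  by_cases hy : ∀ a b : K, a • v + b • d ≠ y
  · by_cases h : ∃ a : K, a • y = δ
    · have := hE _ (hD y hy h).1 (hD y hy h).2
      rw [map_add, hlv, smul_add] at this
      exact add_right_cancel this
    · push Not at h
      exact hE y hy h
  · push Not at hy
    obtain ⟨a, b, rfl⟩ := hy
    rw [map_add, map_smul, map_smul, hlv, hld]
    module

/-- locality modulo `x`. -/
lemma local_of [FiniteDimensional K U] [Nontrivial V]
    (x : U) (φ : U →ₗ[K] K) (hφ : φ x = 1) (Φ : (U →ₗ[K] V) →ₗ[K] V)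
    (h : ∀ f : U →ₗ[K] K, f x = 0 → ∃ c : K, ∀ y, Φ (f.smulRight y) = c • y) :
    ∃ u : U, ∀ s : U →ₗ[K] V, Φ s = Φ (φ.smulRight (s x)) + s u - φ u • s x := by
  obtain ⟨y, hy⟩ := exists_ne (0 : V)
  obtain ⟨χ, hχ⟩ : ∃ χ : V →ₗ[K] K, χ y = 1 := by
    obtain ⟨χ, hχ⟩ := Module.Projective.exists_dual_ne_zero K hy
    exact ⟨(χ y)⁻¹ • χ, by simp [hχ]⟩
  let Λ : Module.Dual K (Module.Dual K U) :=
    { toFun := fun f => χ (Φ (LinearMap.smulRight f y))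
      map_add' := fun f g => by
        rw [← map_add, ← map_add]; congr 2; ext; simp [add_smul]
      map_smul' := fun c f => by
        rw [RingHom.id_apply, ← map_smul, ← map_smul]; congr 2; ext; simp [mul_smul] }
  obtain ⟨u, hu⟩ := (Module.evalEquiv K U).surjective Λ
  have hu' : ∀ f : U →ₗ[K] K, f x = 0 → ∀ z, Φ (f.smulRight z) = f u • z := by
    intro f hf z
    obtain ⟨c, hc⟩ := h f hf
    have h1 : f u = Λ f := by rw [← hu]; simp
    have h2 : Λ f = c := by
      change χ (Φ (LinearMap.smulRight f y)) = c
      rw [hc]; simp [hχ]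
    rw [hc, h1, h2]
  refine ⟨u, fun s => ?_⟩
  let B := Module.finBasis K U
  let π : U →ₗ[K] U := LinearMap.id - φ.smulRight x
  have hs : s = φ.smulRight (s x) + ∑ i, ((B.coord i).comp π).smulRight (s (B i)) := by
    ext w
    have : s (π w) = ∑ i, B.coord i (π w) • s (B i) := by
      have h := congrArg s (B.sum_repr (π w))
      simp only [map_sum, map_smul] at h
      exact h.symm
    simp only [LinearMap.add_apply, LinearMap.sum_apply, LinearMap.smulRight_apply,
      LinearMap.comp_apply]
    rw [← this]
    simp [π]
  have hsu : ∑ i, Φ (((B.coord i).comp π).smulRight (s (B i))) = s u - φ u • s x := by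
    have e : ∀ i, Φ (((B.coord i).comp π).smulRight (s (B i))) = B.coord i (π u) • s (B i) := by
      intro i
      rw [hu' _ (by simp [π, hφ])]; rfl
    simp only [e]
    have : s (π u) = ∑ i, B.coord i (π u) • s (B i) := by
      have h := congrArg s (B.sum_repr (π u))
      simp only [map_sum, map_smul] at h
      exact h.symm
    rw [← this]; simp [π]
  conv_lhs => rw [hs]
  rw [map_add, map_sum, hsu]; abel

/-- the core statement -/
lemma core [FiniteDimensional K U] {v d δ : V}
    (hli : ∀ a b : K, a • v + b • d = 0 → a = 0 ∧ b = 0) (hδ : δ ≠ 0)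
    (hcard : ∃ c : K, c ≠ 0 ∧ c ≠ 1)
    (x : U) (φ : U →ₗ[K] K) (hφ : φ x = 1) (Φ : (U →ₗ[K] V) →ₗ[K] V)
    (hq : ∀ s : U →ₗ[K] V, (∃ t : K, s x = v + t • d) → δ ∉ LinearMap.range s →
      Φ s ∈ LinearMap.range s) 
    (hcase : (∃ y : V, ∀ a b : K, a • v + b • d ≠ y) ∨ 
      ((∀ y : V, ∃ a b : K, a • v + b • d = y) ∧ 
        ∃ t₁ t₂ t₃ : K, t₁ ≠ t₂ ∧ t₁ ≠ t₃ ∧ t₂ ≠ t₃ ∧ (∀ a : K, a • (v + t₁ • d) ≠ δ) ∧ 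
        (∀ a : K, a • (v + t₂ • d) ≠ δ) ∧ (∀ a : K, a • (v + t₃ • d) ≠ δ))) :
    ∃ (ψ : V →ₗ[K] V) (u : U), (∀ s : U →ₗ[K] V, Φ s = ψ (s x) + s u) ∧ 
      (∀ t : K, (∀ a : K, a • (v + t • d) ≠ δ) → ∃ c : K, ψ (v + t • d) = c • (v + t • d)) := by
  have hp0 : ∀ t : K, v + t • d ≠ 0 := by
    intro t h
    have := hli 1 t (by simpa using h)
    simp at this
  have h0 : ∀ (t : K) (f : U →ₗ[K] K) (y : V), f x = 0 →
      (∀ a b : K, a • (v + t • d) + b • y ≠ δ) →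
      ∃ a b : K, Φ (φ.smulRight (v + t • d)) + Φ (f.smulRight y) = a • (v + t • d) + b • y := by
    intro t f y hf hn
    have := hq (φ.smulRight (v + t • d) + f.smulRight y) ⟨t, by simp [hφ, hf]⟩ (by
      rintro ⟨w, hw⟩
      exact hn (φ w) (f w) (by simpa using hw))
    obtain ⟨w, hw⟩ := this
    refine ⟨φ w, f w, ?_⟩
    rw [← map_add, ← hw]; simp
  have h1 : ∀ t : K, (∀ a : K, a • (v + t • d) ≠ δ) →
      ∃ c : K, Φ (φ.smulRight (v + t • d)) = c • (v + t • d) := by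
    intro t ht
    obtain ⟨a, b, h⟩ := h0 t 0 0 (by simp) (by simpa using ht)
    refine ⟨a, ?_⟩
    have e : (0 : U →ₗ[K] K).smulRight (0 : V) = 0 := by ext; simp
    rw [e] at h
    simpa using h
  have h2 : ∀ (t : K) (f : U →ₗ[K] K) (y : V), f x = 0 →
      (∀ a b : K, a • (v + t • d) + b • y ≠ δ) →
      ∃ a b : K, Φ (f.smulRight y) = a • (v + t • d) + b • y := by
    intro t f y hf hn
    obtain ⟨a, b, h⟩ := h0 t f y hf hn
    obtain ⟨c, hc⟩ := h1 t (fun a => by simpa using hn a 0)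
    refine ⟨a - c, b, ?_⟩
    rw [hc] at h
    linear_combination (norm := module) h
  have hscal : ∀ f : U →ₗ[K] K, f x = 0 → ∃ c : K, ∀ y, Φ (f.smulRight y) = c • y := by
    intro f hf
    let g : V →ₗ[K] V := Φ.comp (LinearMap.smulRightₗ f)
    have hgdef : ∀ y, Φ (f.smulRight y) = g y := fun y => rfl
    simp only [hgdef] at h2 ⊢
    rcases hcase with hy | ⟨hspan, t₁, t₂, t₃, h12, h13, h23, g1, g2, g3⟩
    · refine scalar_of hli hcard hy g ?_ hδ
      intro y hyP hyδ
      have h3 : ∀ a b c : K, a • v + b • d + c • y = 0 → a = 0 ∧ b = 0 ∧ c = 0 := by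
        intro a b c h
        have hc : c = 0 := by
          by_contra hc
          apply hyP (-(c⁻¹ * a)) (-(c⁻¹ * b))
          have : c⁻¹ • (a • v + b • d + c • y) = 0 := by rw [h, smul_zero]
          rw [smul_add, inv_smul_smul₀ hc] at this
          linear_combination (norm := module) -this
        subst hc
        have := hli a b (by simpa using h)
        exact ⟨this.1, this.2, rfl⟩
      have two : ∀ t t' : K, t ≠ t' → (∀ a b : K, a • (v + t • d) + b • y ≠ δ) ∨
          (∀ a b : K, a • (v + t' • d) + b • y ≠ δ) := by
        intro t t' ht
        by_contra! hcon
        obtain ⟨⟨a, b, h⟩, ⟨a', b', h'⟩⟩ := hcon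
        obtain ⟨e1, e2, e3⟩ := h3 (a - a') (a * t - a' * t') (b - b') (by
          linear_combination (norm := module) h - h')
        have : a * (t - t') = 0 := by linear_combination e2 - t' * e1
        have ha : a = 0 := (mul_eq_zero.1 this).resolve_right (sub_ne_zero.2 ht)
        subst ha
        exact hyδ b (by simpa using h)
      have fin : ∀ t t' : K, t ≠ t' → (∀ a b : K, a • (v + t • d) + b • y ≠ δ) →
          (∀ a b : K, a • (v + t' • d) + b • y ≠ δ) → ∃ c : K, g y = c • y := by
        intro t t' ht hb hb'
        obtain ⟨a, b, h⟩ := h2 t f y hf hb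
        obtain ⟨a', b', h'⟩ := h2 t' f y hf hb'
        rw [hgdef] at h h'
        obtain ⟨e1, e2, e3⟩ := h3 (a - a') (a * t - a' * t') (b - b') (by
          linear_combination (norm := module) h' - h)
        have : a * (t - t') = 0 := by linear_combination e2 - t' * e1
        have ha : a = 0 := (mul_eq_zero.1 this).resolve_right (sub_ne_zero.2 ht)
        subst ha
        exact ⟨b, by simpa using h⟩
      obtain ⟨c, hc0, hc1⟩ := hcard
      rcases two 0 1 zero_ne_one with h | h
      · rcases two 1 c hc1.symm with h' | h'
        · exact fin 0 1 zero_ne_one h h'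
        · exact fin 0 c hc0.symm h h'
      · rcases two 0 c hc0.symm with h' | h'
        · exact fin 0 1 zero_ne_one h' h
        · exact fin 1 c hc1.symm h h'
    · have e : ∀ t : K, (∀ a : K, a • (v + t • d) ≠ δ) →
          ∃ c : K, g (v + t • d) = c • (v + t • d) := by
        intro t ht
        obtain ⟨a, b, h⟩ := h2 t f (v + t • d) hf (fun a b => by rw [← add_smul]; exact ht _)
        exact ⟨a + b, by rw [add_smul]; exact h⟩
      obtain ⟨c, hv, hd⟩ := three_eig hli g h12 h13 h23 (e _ g1) (e _ g2) (e _ g3)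
      refine ⟨c, fun y => ?_⟩
      obtain ⟨a, b, rfl⟩ := hspan y
      rw [map_add, map_smul, map_smul, hv, hd]; module
  have : Nontrivial V := ⟨δ, 0, hδ⟩
  obtain ⟨u, hu⟩ := local_of x φ hφ Φ hscal
  refine ⟨Φ.comp (LinearMap.smulRightₗ φ) - φ u • LinearMap.id, u, fun s => ?_, fun t ht => ?_⟩
  · rw [hu s]
    change _ = Φ (φ.smulRight (s x)) - φ u • s x + s u
    abel
  · obtain ⟨c, hc⟩ := h1 t ht
    refine ⟨c - φ u, ?_⟩
    change Φ (φ.smulRight (v + t • d)) - φ u • (v + t • d) = _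
    rw [hc, sub_smul]

/-- three good parameters -/
lemma three_good (hK : 2 < Cardinal.mk K) (bad : K → Prop)
    (hb : ∀ s t, bad s → bad t → s = t) (h : ¬ (Nat.card K = 3 ∧ ∃ t, bad t)) :
    ∃ t₁ t₂ t₃ : K, t₁ ≠ t₂ ∧ t₁ ≠ t₃ ∧ t₂ ≠ t₃ ∧ ¬ bad t₁ ∧ ¬ bad t₂ ∧ ¬ bad t₃ := by
  classical
  obtain ⟨c, hc0, hc1⟩ : ∃ c : K, c ≠ 0 ∧ c ≠ 1 := by
    by_contra! hcon
    have : Set.univ ⊆ ({0, 1} : Set K) := fun c _ => by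
      by_cases h : c = 0
      · simp [h]
      · simp [hcon c h]
    have h2 := Cardinal.mk_le_mk_of_subset this
    rw [Cardinal.mk_univ] at h2
    have h3 : Cardinal.mk ({0, 1} : Set K) ≤ 2 := by
      rw [Cardinal.mk_insert (by simp), Cardinal.mk_singleton]; norm_num
    exact absurd (h2.trans h3) (not_le.2 hK)
  by_cases hbad : ∃ t, bad t
  · obtain ⟨t₀, ht₀⟩ := hbad
    have : ∃ e : K, e ≠ 0 ∧ e ≠ 1 ∧ e ≠ c := by
      by_contra! hcon
      apply h
      refine ⟨?_, t₀, ht₀⟩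
      have hu : (Set.univ : Set K) = {0, 1, c} := by
        ext e
        simp only [Set.mem_univ, Set.mem_insert_iff, Set.mem_singleton_iff, true_iff]
        by_cases h0 : e = 0
        · exact Or.inl h0
        · by_cases h1 : e = 1
          · exact Or.inr (Or.inl h1)
          · exact Or.inr (Or.inr (hcon e h0 h1))
      rw [← Set.ncard_univ, hu]
      rw [Set.ncard_eq_three]
      exact ⟨0, 1, c, zero_ne_one, hc0.symm, hc1.symm, rfl⟩
    obtain ⟨e, he0, he1, hec⟩ := this
    have nb : ∀ t, t ≠ t₀ → ¬ bad t := fun t ht hbt => ht (hb _ _ hbt ht₀)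
    by_cases k0 : t₀ = 0
    · subst k0
      exact ⟨1, c, e, hc1.symm, he1.symm, hec.symm, nb _ one_ne_zero, nb _ hc0, nb _ he0⟩
    by_cases k1 : t₀ = 1
    · subst k1
      exact ⟨0, c, e, hc0.symm, he0.symm, hec.symm, nb _ zero_ne_one, nb _ hc1, nb _ he1⟩
    by_cases k2 : t₀ = c
    · subst k2
      exact ⟨0, 1, e, zero_ne_one, he0.symm, he1.symm, nb _ hc0.symm, nb _ hc1.symm, nb _ hec⟩
    exact ⟨0, 1, c, zero_ne_one, hc0.symm, hc1.symm, nb _ (Ne.symm k0), nb _ (Ne.symm k1),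
      nb _ (Ne.symm k2)⟩
  · push Not at hbad
    exact ⟨0, 1, c, zero_ne_one, hc0.symm, hc1.symm, hbad _, hbad _, hbad _⟩

/-- dimension count -/
lemma mem_dir [FiniteDimensional K U] [FiniteDimensional K V]
    (W : Submodule K (U →ₗ[K] V)) (x : U) (φ : U →ₗ[K] K) (hφ : φ x = 1)
    (hW : finrank K (U →ₗ[K] V) + 1 = finrank K W + finrank K V)
    (L : Submodule K V) (hL : finrank K L = 1) (h : ∀ s ∈ W, s x ∈ L) :
    ∀ s : U →ₗ[K] V, s x ∈ L → s ∈ W := by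
  let E : (U →ₗ[K] V) →ₗ[K] V := LinearMap.applyₗ x
  let q : (U →ₗ[K] V) →ₗ[K] V ⧸ L := L.mkQ.comp E
  have hsurj : Function.Surjective q := by
    apply (Submodule.mkQ_surjective L).comp
    intro y
    exact ⟨φ.smulRight y, by simp [E, hφ]⟩
  have hle : W ≤ LinearMap.ker q := by
    intro s hs
    simpa [q, E] using h s hs
  have h1 := LinearMap.finrank_range_add_finrank_ker q
  rw [LinearMap.range_eq_top.2 hsurj, finrank_top] at h1
  have h2 := L.finrank_quotient_add_finrank
  have : W = LinearMap.ker q := Submodule.eq_of_le_of_finrank_eq hle (by omega)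
  intro s hs
  rw [this]
  simpa [q, E] using hs

end QRC


attribute [local instance] AffineSubspace.toAddTorsor

/-- Let `K` have more than 2 elements, `dim V ≥ 2`, and `𝒮` an affine
subspace of `L(U,V)` with `codim 𝒮 = dim V − 1`. Assume there is `x ∈ U` such that the
affine subspace `𝒮x = {s x : s ∈ 𝒮}` of `V` has dimension 1 and is not a linear
subspace (i.e. `0 ∉ 𝒮x`). Let `F : 𝒮 → V` be a non-local affine map that is
quasi-range-compatible with respect to a 1-dimensional linear subspace `D₀` of `V`. Then
(i) `K` has exactly 3 elements; (ii) `D₀ ∩ 𝒮x ≠ ∅`; (iii) there is `x' ∈ U` with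
`F s − s x' ∈ span (𝒮x)` for all `s ∈ 𝒮`; (iv) if `dim V > 2` then there are a
`K`-linear endomorphism `ψ` of `span (𝒮x)` (encoded as a linear map `V →ₗ[K] V`
preserving `span (𝒮x)`) and `x' ∈ U` with `F s = ψ (s x) + s x'` for all `s ∈ 𝒮`. -/
theorem quasi_range_compatible_affine_map_special_type_not_linear
    (K U V : Type*) [Field K] (hK : 2 < Cardinal.mk K)
    [AddCommGroup U] [Module K U] [FiniteDimensional K U]
    [AddCommGroup V] [Module K V] [FiniteDimensional K V]
    (hV : 2 ≤ Module.finrank K V)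
    (𝒮 : AffineSubspace K (U →ₗ[K] V)) [Nonempty ↥𝒮]
    (hcodim : Module.finrank K (U →ₗ[K] V) + 1 =
      Module.finrank K 𝒮.direction + Module.finrank K V)
    (x : U) (Sx : AffineSubspace K V)
    (hSx : Sx = AffineSubspace.map (LinearMap.applyₗ x).toAffineMap 𝒮)
    (hSxdim : Module.finrank K Sx.direction = 1)
    (hSxnotlin : (0 : V) ∉ Sx)
    (F : ↥𝒮 →ᵃ[K] V)
    (hnl : ¬ ∃ y : U, ∀ s : ↥𝒮, F s = (s : U →ₗ[K] V) y)
    (D₀ : Submodule K V) (hD₀ : Module.finrank K D₀ = 1)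
    (hq : ∀ s : ↥𝒮, ¬ D₀ ≤ LinearMap.range (s : U →ₗ[K] V) →
      F s ∈ LinearMap.range (s : U →ₗ[K] V)) :
    Nat.card K = 3 ∧
    ((D₀ : Set V) ∩ (Sx : Set V)).Nonempty ∧
    (∃ x' : U, ∀ s : ↥𝒮,
      F s - (s : U →ₗ[K] V) x' ∈ Submodule.span K (Sx : Set V)) ∧
    (2 < Module.finrank K V →
      ∃ (ψ : V →ₗ[K] V) (x' : U),
        (∀ y ∈ Submodule.span K (Sx : Set V), ψ y ∈ Submodule.span K (Sx : Set V)) ∧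
        ∀ s : ↥𝒮, F s = ψ ((s : U →ₗ[K] V) x) + (s : U →ₗ[K] V) x') := by
  classical
  obtain ⟨⟨s₀, hs₀⟩⟩ := ‹Nonempty ↥𝒮›
  have hSxmem : ∀ y, y ∈ Sx ↔ ∃ s ∈ 𝒮, s x = y := by
    intro y
    rw [hSx, AffineSubspace.mem_map]
    rfl
  have hx : x ≠ 0 := by
    rintro rfl
    exact hSxnotlin ((hSxmem 0).2 ⟨s₀, hs₀, map_zero _⟩)
  obtain ⟨φ, hφ⟩ : ∃ φ : U →ₗ[K] K, φ x = 1 := by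
    obtain ⟨χ, hχ⟩ := Module.Projective.exists_dual_ne_zero K hx
    exact ⟨(χ x)⁻¹ • χ, by simp [hχ]⟩
  obtain ⟨⟨d, hdL⟩, hd0, hdspan⟩ := finrank_eq_one_iff'.1 hSxdim
  have hd0' : d ≠ 0 := fun h => hd0 (Subtype.ext h)
  have hLmem : ∀ y, y ∈ Sx.direction ↔ ∃ t : K, y = t • d := by
    intro y
    constructor
    · intro hy
      obtain ⟨t, ht⟩ := hdspan ⟨y, hy⟩
      exact ⟨t, (congrArg Subtype.val ht).symm⟩
    · rintro ⟨t, rfl⟩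
      exact Submodule.smul_mem _ _ hdL
  obtain ⟨v, hv⟩ : ∃ v, v = s₀ x := ⟨_, rfl⟩
  have hvS : v ∈ Sx := (hSxmem v).2 ⟨s₀, hs₀, hv.symm⟩
  have hSxmem' : ∀ y, y ∈ Sx ↔ ∃ t : K, y = v + t • d := by
    intro y
    constructor
    · intro hy
      obtain ⟨t, ht⟩ := (hLmem _).1 (AffineSubspace.vsub_mem_direction hy hvS)
      refine ⟨t, ?_⟩
      rw [← ht, vsub_eq_sub]; abel
    · rintro ⟨t, rfl⟩
      have := AffineSubspace.vadd_mem_of_mem_direction ((hLmem _).2 ⟨t, rfl⟩) hvS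
      rwa [vadd_eq_add, add_comm] at this
  have hmem : ∀ s, s ∈ 𝒮 ↔ ∃ t : K, s x = v + t • d := by
    intro s
    constructor
    · intro hs
      exact (hSxmem' _).1 ((hSxmem _).2 ⟨s, hs, rfl⟩)
    · rintro ⟨t, ht⟩
      have h1 := QRC.mem_dir 𝒮.direction x φ hφ hcodim Sx.direction hSxdim (by
        intro m hm
        rw [hSx, AffineSubspace.map_direction]
        exact ⟨m, hm, rfl⟩) (s - s₀) ((hLmem _).2 ⟨t, by
          rw [LinearMap.sub_apply, ht, hv]; abel⟩)
      have := AffineSubspace.vadd_mem_of_mem_direction h1 hs₀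
      rwa [vadd_eq_add, sub_add_cancel] at this
  have hli : ∀ a b : K, a • v + b • d = 0 → a = 0 ∧ b = 0 := by
    intro a b h
    have ha : a = 0 := by
      by_contra ha
      apply hSxnotlin
      rw [hSxmem']
      refine ⟨a⁻¹ * b, ?_⟩
      have : a⁻¹ • (a • v + b • d) = 0 := by rw [h, smul_zero]
      rw [smul_add, inv_smul_smul₀ ha, smul_smul] at this
      exact this.symm
    subst ha
    refine ⟨rfl, ?_⟩
    have h' : b • d = 0 := by simpa using h
    exact (smul_eq_zero.1 h').resolve_right hd0'
  obtain ⟨⟨δ, hδD⟩, hδ0, hδspan⟩ := finrank_eq_one_iff'.1 hD₀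
  have hδ0' : δ ≠ 0 := fun h => hδ0 (Subtype.ext h)
  have hDle : ∀ W : Submodule K V, D₀ ≤ W → δ ∈ W := fun W h => h hδD
  -- linear extension of `F`
  obtain ⟨Φ, hΦ⟩ : ∃ Φ : (U →ₗ[K] V) →ₗ[K] V, ∀ s : ↥𝒮, F s = Φ s := by
    obtain ⟨Φ₀, hΦ₀⟩ := LinearMap.exists_extend F.linear
    obtain ⟨χ, hχ⟩ : ∃ χ : V →ₗ[K] K, χ v = 1 ∧ χ d = 0 := by
      have hvn : v ∉ Sx.direction := by
        rw [hLmem]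
        rintro ⟨t, ht⟩
        have := hli 1 (-t) (by rw [ht]; module)
        simp at this
      obtain ⟨χ, h1, h2⟩ := Submodule.exists_le_ker_of_notMem hvn
      refine ⟨(χ v)⁻¹ • χ, by simp [h1], ?_⟩
      have : χ d = 0 := h2 hdL
      simp [this]
    refine ⟨Φ₀ + (χ.comp (LinearMap.applyₗ x)).smulRight (F ⟨s₀, hs₀⟩ - Φ₀ s₀), fun s => ?_⟩
    obtain ⟨t, ht⟩ := (hmem s).1 s.2
    have e1 : χ ((s : U →ₗ[K] V) x) = 1 := by rw [ht]; simp [hχ.1, hχ.2]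
    have e2 : F.linear (s -ᵥ ⟨s₀, hs₀⟩) = Φ₀ ((s : U →ₗ[K] V) - s₀) := by
      rw [← hΦ₀]; rfl
    rw [AffineMap.linearMap_vsub, vsub_eq_sub, map_sub] at e2
    have e3 : (χ.comp (LinearMap.applyₗ x)) (s : U →ₗ[K] V) = 1 := e1
    rw [LinearMap.add_apply, LinearMap.smulRight_apply, e3, one_smul]
    linear_combination (norm := module) e2
  have hq' : ∀ s : U →ₗ[K] V, (∃ t : K, s x = v + t • d) → δ ∉ LinearMap.range s →
      Φ s ∈ LinearMap.range s := by
    intro s hs hn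
    have := hq ⟨s, (hmem s).2 hs⟩ (fun h => hn (h hδD))
    rwa [hΦ] at this
  have hcard : ∃ c : K, c ≠ 0 ∧ c ≠ 1 := by
    obtain ⟨a, b, c, hab, hac, hbc, -⟩ := QRC.three_good hK (fun _ => False)
      (fun _ _ h => h.elim) (by simp)
    refine ⟨(c - a) / (b - a), div_ne_zero (sub_ne_zero.2 hac.symm) (sub_ne_zero.2 hab.symm), ?_⟩
    rw [Ne, div_eq_one_iff_eq (sub_ne_zero.2 hab.symm)]
    intro h
    exact hbc (sub_left_injective h).symm
  have hbad : ∀ s t : K, (∃ a : K, a • (v + s • d) = δ) → (∃ a : K, a • (v + t • d) = δ) →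
      s = t := by
    rintro s t ⟨a, ha⟩ ⟨b, hb⟩
    obtain ⟨e1, e2⟩ := hli (a - b) (a * s - b * t) (by
      linear_combination (norm := module) ha - hb)
    have ha0 : a ≠ 0 := by rintro rfl; exact hδ0' (by simpa using ha.symm)
    have : a * (s - t) = 0 := by linear_combination e2 - t * e1
    exact sub_eq_zero.1 ((mul_eq_zero.1 this).resolve_left ha0)
  have hcases : (∃ y : V, ∀ a b : K, a • v + b • d ≠ y) ∨
      (∀ y : V, ∃ a b : K, a • v + b • d = y) := by
    by_cases h : ∃ y : V, ∀ a b : K, a • v + b • d ≠ y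
    · exact Or.inl h
    · push Not at h
      exact Or.inr h
  have hvspan : v ∈ Submodule.span K (Sx : Set V) := Submodule.subset_span hvS
  have hpspan : ∀ t : K, v + t • d ∈ Submodule.span K (Sx : Set V) := fun t =>
    Submodule.subset_span ((hSxmem' _).2 ⟨t, rfl⟩)
  have hdspan' : d ∈ Submodule.span K (Sx : Set V) := by
    have := Submodule.sub_mem _ (hpspan 1) hvspan
    simpa using this
  have hmain : Nat.card K = 3 ∧ ∃ t : K, ∃ a : K, a • (v + t • d) = δ := by
    by_contra hcon
    obtain ⟨t₁, t₂, t₃, h12, h13, h23, g1, g2, g3⟩ := QRC.three_good hK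
      (fun t => ∃ a : K, a • (v + t • d) = δ) hbad hcon
    push Not at g1 g2 g3
    obtain ⟨ψ, u, hψ, hψe⟩ := QRC.core hli hδ0' hcard x φ hφ Φ hq'
      (hcases.imp_right fun h => ⟨h, t₁, t₂, t₃, h12, h13, h23, g1, g2, g3⟩)
    obtain ⟨c, hcv, hcd⟩ := QRC.three_eig hli ψ h12 h13 h23 (hψe _ g1) (hψe _ g2) (hψe _ g3)
    apply hnl
    refine ⟨c • x + u, fun s => ?_⟩
    obtain ⟨t, ht⟩ := (hmem s).1 s.2
    rw [hΦ, hψ, map_add, map_smul, ht, map_add, map_smul, hcv, hcd]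
    module
  obtain ⟨hK3, t₀, a₀, hta⟩ := hmain
  have ha0 : a₀ ≠ 0 := by rintro rfl; exact hδ0' (by simpa using hta.symm)
  have key : (∃ y : V, ∀ a b : K, a • v + b • d ≠ y) →
      ∃ (ψ : V →ₗ[K] V) (x' : U),
        (∀ y ∈ Submodule.span K (Sx : Set V), ψ y ∈ Submodule.span K (Sx : Set V)) ∧
        ∀ s : ↥𝒮, F s = ψ ((s : U →ₗ[K] V) x) + (s : U →ₗ[K] V) x' := by
    intro hy
    obtain ⟨ψ, u, hψ, hψe⟩ := QRC.core hli hδ0' hcard x φ hφ Φ hq' (Or.inl hy)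
    refine ⟨ψ, u, ?_, fun s => by rw [hΦ, hψ]⟩
    obtain ⟨c, hc0, hc1⟩ := hcard
    have good : ∀ t : K, t ≠ t₀ → ψ (v + t • d) ∈ Submodule.span K (Sx : Set V) := by
      intro t ht
      obtain ⟨e, he⟩ := hψe t (fun a ha => ht (hbad t t₀ ⟨a, ha⟩ ⟨a₀, hta⟩))
      rw [he]
      exact Submodule.smul_mem _ _ (hpspan t)
    have g1 := good (t₀ + 1) (by simp)
    have g2 := good (t₀ + c) (by simpa using hc0)
    have hψd : ψ d ∈ Submodule.span K (Sx : Set V) := by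
      have h := Submodule.smul_mem _ (c - 1)⁻¹ (Submodule.sub_mem _ g2 g1)
      have e : ψ (v + (t₀ + c) • d) - ψ (v + (t₀ + 1) • d) = (c - 1) • ψ d := by
        simp only [map_add, map_smul]; module
      rwa [e, inv_smul_smul₀ (sub_ne_zero.2 hc1)] at h
    have hψv : ψ v ∈ Submodule.span K (Sx : Set V) := by
      have h := Submodule.sub_mem _ g1 (Submodule.smul_mem _ (t₀ + 1) hψd)
      rwa [map_add, map_smul, add_sub_cancel_right] at h
    intro y hy
    have hle : Submodule.span K (Sx : Set V) ≤ (Submodule.span K (Sx : Set V)).comap ψ := by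
      rw [Submodule.span_le]
      intro z hz
      obtain ⟨t, rfl⟩ := (hSxmem' z).1 hz
      change ψ (v + t • d) ∈ Submodule.span K (Sx : Set V)
      rw [map_add, map_smul]
      exact Submodule.add_mem _ hψv (Submodule.smul_mem _ _ hψd)
    exact hle hy
  refine ⟨hK3, ⟨v + t₀ • d, ?_, (hSxmem' _).2 ⟨t₀, rfl⟩⟩, ?_, ?_⟩
  · have h := D₀.smul_mem a₀⁻¹ hδD
    rwa [← hta, inv_smul_smul₀ ha0] at h
  · rcases hcases with hy | hspan
    · obtain ⟨ψ, u, h1, h2⟩ := key hy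
      refine ⟨u, fun s => ?_⟩
      rw [h2, add_sub_cancel_right]
      exact h1 _ (Submodule.subset_span ((hSxmem _).2 ⟨s, s.2, rfl⟩))
    · refine ⟨0, fun s => ?_⟩
      obtain ⟨a, b, h⟩ := hspan (F s - (s : U →ₗ[K] V) 0)
      rw [← h]
      exact Submodule.add_mem _ (Submodule.smul_mem _ _ hvspan) (Submodule.smul_mem _ _ hdspan')
  · intro hV3
    apply key
    rcases hcases with hy | hspan
    · exact hy
    · exfalso
      have htop : Submodule.span K (({v, d} : Finset V) : Set V) = ⊤ := by
        rw [eq_top_iff]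
        intro y _
        obtain ⟨a, b, rfl⟩ := hspan y
        rw [Finset.coe_pair, Submodule.mem_span_pair]
        exact ⟨a, b, rfl⟩
      have h := finrank_span_finset_le_card (R := K) ({v, d} : Finset V)
      rw [Set.finrank, htop, finrank_top] at h
      have := Finset.card_le_two (a := v) (b := d)
      omega
end

section
/- Let 𝒮 be an affine subspace of L(U,V) such that either codim 𝒮 ≤ dim V − 3, or codim 𝒮 ≤ dim V − 1 and K has more than 2 elements. Let F : 𝒮 → V be an affine map that is quasi-range-compatible with respect to some 1-dimensional linear subspace D₀ of V; let S be the translation vector space of 𝒮 and F⃗ : S → V the linear part of F. Let D₁ be a 1-dimensional linear subspace of V that is contained in the kernel of every operator of S⊥. Then for every 1-dimensional linear subspace D of V that is different from both D₀ and D₁, and for every s ∈ S with range(s) = D, one has F⃗(s) ∈ D. -/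
attribute [local instance] AffineSubspace.toAddTorsor

theorem aux_dual2 {K W : Type*} [Field K] [AddCommGroup W] [Module K W]
    {a b : W} (ha : a ≠ 0) (hb : b ≠ 0) :
    ∃ f : Module.Dual K W, f a ≠ 0 ∧ f b ≠ 0 := by
  obtain ⟨f, hf⟩ : ∃ f : Module.Dual K W, f a ≠ 0 := by
    by_contra! h
    exact ha ((Module.forall_dual_apply_eq_zero_iff K a).1 h)
  obtain ⟨g, hg⟩ : ∃ f : Module.Dual K W, f b ≠ 0 := by
    by_contra! h
    exact hb ((Module.forall_dual_apply_eq_zero_iff K b).1 h)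
  by_cases h1 : f b = 0
  · by_cases h2 : g a = 0
    · exact ⟨f + g, by simpa [h2], by simpa [h1]⟩
    · exact ⟨g, h2, hg⟩
  · exact ⟨f, hf, h1⟩

theorem aux_dual3 {K W : Type*} [Field K] [AddCommGroup W] [Module K W]
    (hK : 2 < Cardinal.mk K)
    {a b c : W} (ha : a ≠ 0) (hb : b ≠ 0) (hc : c ≠ 0) :
    ∃ f : Module.Dual K W, f a ≠ 0 ∧ f b ≠ 0 ∧ f c ≠ 0 := by
  obtain ⟨f, hfa, hfb⟩ := aux_dual2 (K := K) ha hb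
  obtain ⟨h, hh⟩ : ∃ f : Module.Dual K W, f c ≠ 0 := by
    by_contra! h
    exact hc ((Module.forall_dual_apply_eq_zero_iff K c).1 h)
  by_cases hfc : f c = 0
  · have h3 : (3 : Cardinal) ≤ Cardinal.mk K := by
      have := (Cardinal.natCast_add_one_le_iff (n := 2)).2 (by simpa using hK)
      rwa [Nat.cast_ofNat, two_add_one_eq_three] at this
    obtain ⟨l, hl1, hl2⟩ := Cardinal.exists_ne_ne_of_three_le h3 (-(h a) / f a) (-(h b) / f b)
    refine ⟨h + l • f, ?_, ?_, by simpa [hfc]⟩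
    · intro h0
      apply hl1
      rw [eq_div_iff hfa]
      simp at h0
      linear_combination h0
    · intro h0
      apply hl2
      rw [eq_div_iff hfb]
      simp at h0
      linear_combination h0
  · exact ⟨f, hfa, hfb, hfc⟩

theorem aux_key {K U V : Type*} [Field K]
    [AddCommGroup U] [Module K U] [FiniteDimensional K U]
    [AddCommGroup V] [Module K V]
    (S : Submodule K (U →ₗ[K] V)) (φ : Module.Dual K V)
    (h : ∀ u : U, (∀ s ∈ S, φ (s u) = 0) → u = 0) (g : Module.Dual K U) :
    ∃ s ∈ S, φ ∘ₗ s = g := by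
  by_contra! hne
  let R : Submodule K (Module.Dual K U) := S.map (LinearMap.compRight K φ)
  have hR : R < ⊤ := by
    rw [lt_top_iff_ne_top]
    intro ht
    have : g ∈ R := ht ▸ Submodule.mem_top
    obtain ⟨s, hs, hg⟩ := this
    exact hne s hs hg
  obtain ⟨f, hf, hle⟩ := Submodule.exists_le_ker_of_lt_top R hR
  apply hf
  obtain ⟨u, rfl⟩ := (Module.evalEquiv K U).surjective f
  have : u = 0 := h u fun s hs => by
    have := hle (Submodule.mem_map_of_mem (f := LinearMap.compRight K φ) hs)
    simpa using this
  simp [this]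

/-- Let `𝒮` be an affine subspace of `L(U,V)` such that either
`codim 𝒮 ≤ dim V − 3`, or `codim 𝒮 ≤ dim V − 1` and `K` has more than 2 elements.
Let `F : 𝒮 → V` be an affine map that is quasi-range-compatible with respect to some
1-dimensional linear subspace `D₀` of `V`, let `S = 𝒮.direction` and `F⃗ = F.linear`.
Let `D₁` be a 1-dimensional linear subspace of `V` contained in the kernel of every
operator of `S⊥` (membership `t ∈ S⊥` expressed via the trace form). Then for every
1-dimensional subspace `D` of `V` different from `D₀` and `D₁` and every `s ∈ S` with
`range s = D`, one has `F⃗ s ∈ D`. -/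
theorem linear_part_maps_rank_one_into_range
    (K U V : Type*) [Field K]
    [AddCommGroup U] [Module K U] [FiniteDimensional K U]
    [AddCommGroup V] [Module K V] [FiniteDimensional K V]
    (𝒮 : AffineSubspace K (U →ₗ[K] V)) [Nonempty ↥𝒮]
    (hcodim : (Module.finrank K (U →ₗ[K] V) + 3 ≤
        Module.finrank K 𝒮.direction + Module.finrank K V) ∨
      (Module.finrank K (U →ₗ[K] V) + 1 ≤
        Module.finrank K 𝒮.direction + Module.finrank K V ∧ 2 < Cardinal.mk K))
    (F : ↥𝒮 →ᵃ[K] V)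
    (D₀ : Submodule K V) (hD₀ : Module.finrank K D₀ = 1)
    (hq : ∀ s : ↥𝒮, ¬ D₀ ≤ LinearMap.range (s : U →ₗ[K] V) →
      F s ∈ LinearMap.range (s : U →ₗ[K] V))
    (D₁ : Submodule K V) (hD₁ : Module.finrank K D₁ = 1)
    (hker : ∀ t : V →ₗ[K] U,
      (∀ s ∈ 𝒮.direction, LinearMap.trace K U (t ∘ₗ s) = 0) →
      D₁ ≤ LinearMap.ker t) :
    ∀ D : Submodule K V, Module.finrank K D = 1 → D ≠ D₀ → D ≠ D₁ →
      ∀ s : ↥𝒮.direction, LinearMap.range (s : U →ₗ[K] V) = D →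
        F.linear s ∈ D := by
  intro D hD hDD₀ hDD₁ s hs
  by_contra hx
  set x := F.linear s with hxdef
  obtain ⟨d₀, hd₀, rfl⟩ : ∃ d, d ≠ 0 ∧ D₀ = K ∙ d := by
    obtain ⟨d, hd, h⟩ := finrank_eq_one_iff'.1 hD₀
    refine ⟨d, by simpa using hd, le_antisymm ?_ ?_⟩
    · intro y hy
      obtain ⟨c, hc⟩ := h ⟨y, hy⟩
      exact Submodule.mem_span_singleton.2 ⟨c, congrArg Subtype.val hc⟩
    · simp
  obtain ⟨d₁, hd₁, rfl⟩ : ∃ d, d ≠ 0 ∧ D₁ = K ∙ d := by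
    obtain ⟨d, hd, h⟩ := finrank_eq_one_iff'.1 hD₁
    refine ⟨d, by simpa using hd, le_antisymm ?_ ?_⟩
    · intro y hy
      obtain ⟨c, hc⟩ := h ⟨y, hy⟩
      exact Submodule.mem_span_singleton.2 ⟨c, congrArg Subtype.val hc⟩
    · simp
  have hn₀ : d₀ ∉ D := fun h => hDD₀ (Submodule.eq_of_le_of_finrank_eq
    (by simpa using h) (by rw [hD, hD₀])).symm
  have hn₁ : d₁ ∉ D := fun h => hDD₁ (Submodule.eq_of_le_of_finrank_eq
    (by simpa using h) (by rw [hD, hD₁])).symm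
  have key : ∀ φ : Module.Dual K V, (∀ d ∈ D, φ d = 0) → φ x ≠ 0 → φ d₀ ≠ 0 →
      ∃ u : U, u ≠ 0 ∧ ∀ r ∈ 𝒮.direction, φ (r u) = 0 := by
    intro φ hφD hφx hφ₀
    by_contra! hno
    have h' : ∀ u : U, (∀ r ∈ 𝒮.direction, φ (r u) = 0) → u = 0 := by
      intro u hu
      by_contra hu0
      obtain ⟨r, hr, hr'⟩ := hno u hu0
      exact hr' (hu r hr)
    obtain ⟨s₀⟩ := ‹Nonempty ↥𝒮›
    obtain ⟨r, hr, hrs⟩ := aux_key 𝒮.direction φ h' (-(φ ∘ₗ (s₀ : U →ₗ[K] V)))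
    have main : ∀ y : ↥𝒮, (∀ u, φ ((y : U →ₗ[K] V) u) = 0) → φ (F y) = 0 := by
      intro y hy
      obtain ⟨u, hu⟩ := hq y (by
        intro hle
        obtain ⟨u, hu⟩ := hle (Submodule.mem_span_singleton_self d₀)
        exact hφ₀ (hu ▸ hy u))
      rw [← hu, hy]
    let s' : ↥𝒮 := (⟨r, hr⟩ : 𝒮.direction) +ᵥ s₀
    have h1 : ∀ u, φ ((s' : U →ₗ[K] V) u) = 0 := by
      intro u
      have := LinearMap.congr_fun hrs u
      simp at this
      simp [s', this]
    have h2 : ∀ u, φ (((s +ᵥ s' : ↥𝒮) : U →ₗ[K] V) u) = 0 := by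
      intro u
      have h3 : φ ((s : U →ₗ[K] V) u) = 0 := hφD _ (hs ▸ LinearMap.mem_range_self _ u)
      have := h1 u
      rw [AffineSubspace.coe_vadd]
      simp [h3, this]
    have h3 := main _ h2
    rw [F.map_vadd, vadd_eq_add, map_add, main _ h1, add_zero] at h3
    exact hφx h3
  have key₁ : ∀ φ : Module.Dual K V, (∀ d ∈ D, φ d = 0) → φ x ≠ 0 → φ d₀ ≠ 0 →
      φ d₁ = 0 := by
    intro φ h1 h2 h3
    obtain ⟨u, hu, hφ⟩ := key φ h1 h2 h3
    have := hker (φ.smulRight u) (by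
      intro r hr
      have : (φ.smulRight u) ∘ₗ r = (φ ∘ₗ r).smulRight u := by ext; simp
      rw [this, LinearMap.trace_smulRight]
      exact hφ r hr) (Submodule.mem_span_singleton_self d₁)
    simpa [hu] using this
  have hx' : D.mkQ x ≠ 0 := by simpa using hx
  have hn₀' : D.mkQ d₀ ≠ 0 := by simpa using hn₀
  have hn₁' : D.mkQ d₁ ≠ 0 := by simpa using hn₁
  have hDq : ∀ f : Module.Dual K (V ⧸ D), ∀ d ∈ D, (f ∘ₗ D.mkQ) d = 0 := by
    intro f d hd
    have : D.mkQ d = 0 := by simpa using hd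
    simp only [LinearMap.comp_apply, this, map_zero]
  by_cases hK : 2 < Cardinal.mk K
  · obtain ⟨f, h1, h2, h3⟩ := aux_dual3 hK hx' hn₀' hn₁'
    exact h3 (key₁ (f ∘ₗ D.mkQ) (hDq f) h1 h2)
  · have hcod := hcodim.resolve_right (fun h => hK h.2)
    have : Finite K := by
      rw [← Cardinal.lt_aleph0_iff_finite]
      exact (not_lt.1 hK).trans_lt (Cardinal.natCast_lt_aleph0 (n := 2))
    obtain ⟨f, h1, h2⟩ := aux_dual2 (K := K) hx' hn₀'
    let φ := f ∘ₗ D.mkQ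
    let E : Submodule K V := D ⊔ ((K ∙ x) ⊔ (K ∙ d₀))
    let W := E.dualAnnihilator
    have hW : ∀ ψ : W, ∃ u : U, u ≠ 0 ∧ ∀ r ∈ 𝒮.direction, (φ + ψ.1) (r u) = 0 := by
      rintro ⟨ψ, hψ⟩
      have hψ' := (Submodule.mem_dualAnnihilator ψ).1 hψ
      have e1 : ψ x = 0 := hψ' _ (Submodule.mem_sup_right (Submodule.mem_sup_left
        (Submodule.mem_span_singleton_self x)))
      have e2 : ψ d₀ = 0 := hψ' _ (Submodule.mem_sup_right (Submodule.mem_sup_right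
        (Submodule.mem_span_singleton_self d₀)))
      refine key _ ?_ ?_ ?_
      · intro d hd
        have e3 := hψ' d (Submodule.mem_sup_left hd)
        have e4 := hDq f d hd
        simp only [LinearMap.add_apply, e3, add_zero]
        exact e4
      · simp only [LinearMap.add_apply, e1, add_zero]
        exact h1
      · simp only [LinearMap.add_apply, e2, add_zero]
        exact h2
    have hWx : ∀ ψ : W, ψ.1 x = 0 := fun ψ => (Submodule.mem_dualAnnihilator ψ.1).1 ψ.2 _
      (Submodule.mem_sup_right (Submodule.mem_sup_left (Submodule.mem_span_singleton_self x)))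
    choose u hu0 hu using hW
    let T := 𝒮.direction.dualAnnihilator
    let Φ : W → T := fun ψ => ⟨(φ + ψ.1) ∘ₗ LinearMap.applyₗ (u ψ), by
      rw [Submodule.mem_dualAnnihilator]
      exact hu ψ⟩
    have hΦ : ∀ ψ (r : U →ₗ[K] V), (Φ ψ).1 r = (φ + ψ.1) (r (u ψ)) := fun _ _ => rfl
    have hφx : φ x ≠ 0 := h1
    have hΦ0 : ∀ ψ, Φ ψ ≠ 0 := by
      intro ψ h0
      apply hu0 ψ
      rw [← Module.forall_dual_apply_eq_zero_iff K]
      intro g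
      have := hΦ ψ (g.smulRight x)
      rw [h0] at this
      simpa [hWx, hφx] using this
    have hinj : Function.Injective Φ := by
      intro ψ ψ' he
      have hr : ∀ r : U →ₗ[K] V, (φ + ψ.1) (r (u ψ)) = (φ + ψ'.1) (r (u ψ')) := by
        intro r
        rw [← hΦ, ← hΦ, he]
      have huu : u ψ = u ψ' := by
        rw [← sub_eq_zero, ← Module.forall_dual_apply_eq_zero_iff K]
        intro g
        have := hr (g.smulRight x)
        simp [hWx, hφx] at this
        simp [this]
      obtain ⟨g, hg⟩ : ∃ g : Module.Dual K U, g (u ψ) ≠ 0 := by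
        by_contra! h
        exact hu0 ψ ((Module.forall_dual_apply_eq_zero_iff K _).1 h)
      ext v
      have := hr (g.smulRight v)
      rw [← huu] at this
      simpa [hg] using this
    have : Finite (Module.Dual K (U →ₗ[K] V)) := Module.finite_of_finite K
    have hlt : Nat.card W < Nat.card T := by
      have : Finite T := inferInstance
      refine lt_of_le_of_ne (Nat.card_le_card_of_injective Φ hinj) ?_
      intro he
      have hb := (Nat.bijective_iff_injective_and_card Φ).2 ⟨hinj, he⟩
      obtain ⟨ψ, hψ⟩ := hb.2 0
      exact hΦ0 ψ hψ
    rw [Module.natCard_eq_pow_finrank (K := K), Module.natCard_eq_pow_finrank (K := K) (V := T)] at hlt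
    have hlt' := (Nat.pow_lt_pow_iff_right Finite.one_lt_card).1 hlt
    have e1 := Subspace.finrank_add_finrank_dualAnnihilator_eq E
    have e2 := Subspace.finrank_add_finrank_dualAnnihilator_eq 𝒮.direction
    have e3 : Module.finrank K E ≤ 3 := by
      have a1 := Submodule.finrank_add_le_finrank_add_finrank D ((K ∙ x) ⊔ (K ∙ d₀))
      have a2 := Submodule.finrank_add_le_finrank_add_finrank (K ∙ x) (K ∙ d₀)
      have a3 : Module.finrank K (K ∙ x) ≤ 1 :=
        (finrank_span_singleton (K := K) (v := x) (fun h => hx (h ▸ D.zero_mem))).le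
      have : Module.finrank K E ≤ _ := a1
      omega
    have e1' : Module.finrank K E + Module.finrank K W = _ := e1
    have e2' : _ + Module.finrank K T = _ := e2
    omega
end

section
/- Let S be a linear subspace of L(U,V), let F : S → V be an additive group homomorphism that is quasi-range-compatible with respect to a 1-dimensional linear subspace D of V, and let V₀ be a linear subspace of V with D ⊄ V₀. Denote by π : V → V/V₀ the canonical projection and set S mod V₀ := {π ∘ s : s ∈ S} ⊆ L(U, V/V₀). Then there is a unique additive group homomorphism G : S mod V₀ → V/V₀ such that G(π ∘ s) = π(F(s)) for all s ∈ S, and this G is quasi-range-compatible with respect to the 1-dimensional subspace π(D) of V/V₀. -/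
/-- Let `S` be a linear subspace of `L(U,V)`, `F : S → V` an additive
homomorphism that is quasi-range-compatible with respect to a 1-dimensional subspace
`D` of `V`, and `V₀` a linear subspace of `V` with `D ⊄ V₀`. With `π = V₀.mkQ` the
canonical projection `V → V/V₀`, set `S mod V₀ := {π ∘ s : s ∈ S}`, i.e.
`Submodule.map (LinearMap.llcomp K U V (V ⧸ V₀) V₀.mkQ) S`. Then there is a unique
additive homomorphism `G : S mod V₀ → V/V₀` with `G (π ∘ s) = π (F s)` for all `s ∈ S`,
and any such `G` is quasi-range-compatible with respect to the 1-dimensional subspace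
`π(D)` of `V/V₀`. -/
theorem quasi_range_compatible_hom_quotient
    (K U V : Type*) [Field K]
    [AddCommGroup U] [Module K U] [FiniteDimensional K U]
    [AddCommGroup V] [Module K V] [FiniteDimensional K V]
    (S : Submodule K (U →ₗ[K] V))
    (F : ↥S →+ V)
    (D : Submodule K V) (hD : Module.finrank K D = 1)
    (hq : ∀ s : ↥S, ¬ D ≤ LinearMap.range (s : U →ₗ[K] V) →
      F s ∈ LinearMap.range (s : U →ₗ[K] V))
    (V₀ : Submodule K V) (hV₀ : ¬ D ≤ V₀) :
    (∃! G : ↥(Submodule.map (LinearMap.llcomp K U V (V ⧸ V₀) V₀.mkQ) S) →+ V ⧸ V₀,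
      ∀ (s : ↥S) (h : V₀.mkQ ∘ₗ (s : U →ₗ[K] V) ∈
          Submodule.map (LinearMap.llcomp K U V (V ⧸ V₀) V₀.mkQ) S),
        G ⟨V₀.mkQ ∘ₗ (s : U →ₗ[K] V), h⟩ = V₀.mkQ (F s)) ∧
    Module.finrank K (Submodule.map V₀.mkQ D) = 1 ∧
    (∀ G : ↥(Submodule.map (LinearMap.llcomp K U V (V ⧸ V₀) V₀.mkQ) S) →+ V ⧸ V₀,
      (∀ (s : ↥S) (h : V₀.mkQ ∘ₗ (s : U →ₗ[K] V) ∈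
          Submodule.map (LinearMap.llcomp K U V (V ⧸ V₀) V₀.mkQ) S),
        G ⟨V₀.mkQ ∘ₗ (s : U →ₗ[K] V), h⟩ = V₀.mkQ (F s)) →
      ∀ t : ↥(Submodule.map (LinearMap.llcomp K U V (V ⧸ V₀) V₀.mkQ) S),
        ¬ Submodule.map V₀.mkQ D ≤ LinearMap.range (t : U →ₗ[K] V ⧸ V₀) →
          G t ∈ LinearMap.range (t : U →ₗ[K] V ⧸ V₀)) := by
  have key0 : ∀ s : ↥S, V₀.mkQ ∘ₗ (s : U →ₗ[K] V) = 0 → V₀.mkQ (F s) = 0 := by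
    intro s hs
    have hr : LinearMap.range (s : U →ₗ[K] V) ≤ V₀ := by
      rintro _ ⟨u, rfl⟩
      have := LinearMap.congr_fun hs u
      simpa using this
    have := hr (hq s (fun h => hV₀ (h.trans hr)))
    simpa using this
  have key : ∀ s s' : ↥S, V₀.mkQ ∘ₗ (s : U →ₗ[K] V) = V₀.mkQ ∘ₗ (s' : U →ₗ[K] V) →
      V₀.mkQ (F s) = V₀.mkQ (F s') := by
    intro s s' h
    have h0 := key0 (s - s') (by
      rw [Submodule.coe_sub, LinearMap.comp_sub, h, sub_self])
    rw [map_sub, map_sub] at h0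
    exact sub_eq_zero.mp h0
  have ex : ∀ t : ↥(Submodule.map (LinearMap.llcomp K U V (V ⧸ V₀) V₀.mkQ) S),
      ∃ s : ↥S, V₀.mkQ ∘ₗ (s : U →ₗ[K] V) = (t : U →ₗ[K] V ⧸ V₀) := by
    rintro ⟨t, s, hs, rfl⟩
    exact ⟨⟨s, hs⟩, rfl⟩
  refine ⟨?_, ?_, ?_⟩
  · choose c hc using ex
    refine ⟨AddMonoidHom.mk' (fun t => V₀.mkQ (F (c t))) ?_, ?_, ?_⟩
    · intro a b
      rw [← map_add, ← map_add]
      apply key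
      rw [hc, Submodule.coe_add, Submodule.coe_add, LinearMap.comp_add, hc, hc]
    · intro s h
      exact key _ _ (hc _)
    · intro G hG
      ext t
      have h1 := hG (c t) (by rw [hc]; exact t.2)
      have h2 : (⟨V₀.mkQ ∘ₗ (c t : U →ₗ[K] V), by rw [hc]; exact t.2⟩ :
        ↥(Submodule.map (LinearMap.llcomp K U V (V ⧸ V₀) V₀.mkQ) S)) = t := Subtype.ext (hc t)
      rw [h2] at h1
      exact h1
  · have h1 : Module.finrank K (Submodule.map V₀.mkQ D) ≤ 1 := hD ▸ Submodule.finrank_map_le V₀.mkQ D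
    have h2 : Module.finrank K (Submodule.map V₀.mkQ D) ≠ 0 := by
      intro h
      rw [Submodule.finrank_eq_zero, ← le_bot_iff, Submodule.map_le_iff_le_comap,
        Submodule.comap_bot, Submodule.ker_mkQ] at h
      exact hV₀ h
    omega
  · intro G hG t ht
    obtain ⟨s, hs⟩ := ex t
    obtain ⟨t, htS⟩ := t
    dsimp only at hs ht ⊢
    subst hs
    rw [hG s htS]
    rw [LinearMap.range_comp] at ht ⊢
    exact Submodule.mem_map_of_mem (hq s (fun h => ht (Submodule.map_mono h)))
end
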